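/- Over an algebraically closed field K of characteristic 2, the K-vector space dimensions of the second Hochschild cohomology groups of A₁ and A₂ differ: dim_K HH²(A₁) ≠ dim_K HH²(A₂). -/

import Mathlib

/-!  The quiver `Q` of type `D₄`: vertices `1, 2, 3, 4` and arrows
`α : 1 → 4`, `β : 4 → 1`, `γ : 3 → 4`, `δ : 4 → 3`, `ε : 4 → 2`, `ξ : 2 → 4`.
The path algebra `KQ` is presented as the quotient of the free algebra on the
four vertex idempotents `e1, e2, e3, e4` and the six arrows, by the standard
path-algebra relations (orthogonal idempotents summing to `1`, and each arrow
`a : v → w` satisfying `e_v * a = a = a * e_w`, paths being written from left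
to right). -/

/-- Generators of the path algebra: the four vertices and the six arrows. -/
inductive QGen : Type
  | e1 | e2 | e3 | e4 | α | β | γ | δ | ε | ξ
  deriving DecidableEq

namespace PathAlgD4

open QGen

/-- The source vertex of each arrow. -/
def src : QGen → QGen
  | .α => .e1 | .β => .e4 | .γ => .e3 | .δ => .e4 | .ε => .e4 | .ξ => .e2
  | v => v

/-- The target vertex of each arrow. -/
def tgt : QGen → QGen
  | .α => .e4 | .β => .e1 | .γ => .e4 | .δ => .e3 | .ε => .e2 | .ξ => .e4
  | v => v

/-- The generator `g` is a vertex. -/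
def IsVertex (g : QGen) : Prop := g = .e1 ∨ g = .e2 ∨ g = .e3 ∨ g = .e4

/-- The generator `g` is an arrow. -/
def IsArrow (g : QGen) : Prop := g = .α ∨ g = .β ∨ g = .γ ∨ g = .δ ∨ g = .ε ∨ g = .ξ

variable (K : Type) [Field K]

/-- The defining relations of the path algebra of the quiver `Q`, as a quotient
of the free algebra on the vertices and arrows. -/
inductive PathRel : FreeAlgebra K QGen → FreeAlgebra K QGen → Prop
  | vertex_mul (v w : QGen) (hv : IsVertex v) (hw : IsVertex w) :
      PathRel (FreeAlgebra.ι K v * FreeAlgebra.ι K w)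
        (if v = w then FreeAlgebra.ι K v else 0)
  | vertex_sum :
      PathRel (FreeAlgebra.ι K .e1 + FreeAlgebra.ι K .e2 +
        FreeAlgebra.ι K .e3 + FreeAlgebra.ι K .e4) 1
  | src_mul (a : QGen) (ha : IsArrow a) :
      PathRel (FreeAlgebra.ι K (src a) * FreeAlgebra.ι K a) (FreeAlgebra.ι K a)
  | mul_tgt (a : QGen) (ha : IsArrow a) :
      PathRel (FreeAlgebra.ι K a * FreeAlgebra.ι K (tgt a)) (FreeAlgebra.ι K a)
  | orth_mul (v a : QGen) (hv : IsVertex v) (ha : IsArrow a) (h : v ≠ src a) :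
      PathRel (FreeAlgebra.ι K v * FreeAlgebra.ι K a) 0
  | mul_orth (a v : QGen) (ha : IsArrow a) (hv : IsVertex v) (h : v ≠ tgt a) :
      PathRel (FreeAlgebra.ι K a * FreeAlgebra.ι K v) 0

/-- The path algebra `KQ` of the quiver `Q` over `K`. -/
abbrev PathAlg : Type := RingQuot (PathRel K)

/-- The image in the path algebra `KQ` of a generator (vertex or arrow). -/
noncomputable def gen (g : QGen) : PathAlg K :=
  RingQuot.mkAlgHom K (PathRel K) (FreeAlgebra.ι K g)

open scoped TensorProduct
open CategoryTheory

variable (K : Type) [Field K]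

/-- The two-sided ideal `I′` of `KQ` generated by `αβ, ξε, γδ, βα + δγ + εξ`
(paths written from left to right). -/
noncomputable def idealA1 : TwoSidedIdeal (PathAlg K) :=
  TwoSidedIdeal.span
    {gen K .α * gen K .β,
     gen K .ξ * gen K .ε,
     gen K .γ * gen K .δ,
     gen K .β * gen K .α + gen K .δ * gen K .γ + gen K .ε * gen K .ξ}

/-- The preprojective algebra `A₁ = KQ/I′` of type `D₄`. -/
abbrev AlgA1 : Type := (idealA1 K).ringCon.Quotient

noncomputable instance : Algebra K (AlgA1 K) :=
  Algebra.mk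
    (show K →+* AlgA1 K from
      (RingCon.mk' (idealA1 K).ringCon).comp (algebraMap K (PathAlg K)))
    (fun k x => by
      induction x using Quotient.ind'
      exact congrArg Quotient.mk'' (Algebra.commutes k _))
    (fun k x => by
      induction x using Quotient.ind'
      exact congrArg Quotient.mk'' (Algebra.smul_def k _))

/-- The two-sided ideal `I` of `KQ` generated by
`αβ − αδγβ, ξε, γδ, βα + δγ + εξ, αβα, βαβ` (paths written from left to right). -/
noncomputable def idealA2 : TwoSidedIdeal (PathAlg K) :=
  TwoSidedIdeal.span
    {gen K .α * gen K .β - gen K .α * gen K .δ * gen K .γ * gen K .β,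
     gen K .ξ * gen K .ε,
     gen K .γ * gen K .δ,
     gen K .β * gen K .α + gen K .δ * gen K .γ + gen K .ε * gen K .ξ,
     gen K .α * gen K .β * gen K .α,
     gen K .β * gen K .α * gen K .β}

/-- The non-standard algebra `A₂ = KQ/I`. -/
abbrev AlgA2 : Type := (idealA2 K).ringCon.Quotient

noncomputable instance : Algebra K (AlgA2 K) :=
  Algebra.mk
    (show K →+* AlgA2 K from
      (RingCon.mk' (idealA2 K).ringCon).comp (algebraMap K (PathAlg K)))
    (fun k x => by
      induction x using Quotient.ind'
      exact congrArg Quotient.mk'' (Algebra.commutes k _))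
    (fun k x => by
      induction x using Quotient.ind'
      exact congrArg Quotient.mk'' (Algebra.smul_def k _))

/-- The second Hochschild cohomology group `HH²(Λ) = Ext²_{Λ ⊗[K] Λᵐᵒᵖ}(Λ, Λ)` of a
`K`-algebra `Λ`, as a `K`-vector space; `Λ` is regarded as a module over its enveloping
algebra `Λ ⊗[K] Λᵐᵒᵖ` via `(a ⊗ bᵒᵖ) • m = a * m * b`. -/
noncomputable def HH2 (A : Type) [Ring A] [Algebra K A] : ModuleCat K :=
  letI : Module (A ⊗[K] Aᵐᵒᵖ) A := TensorProduct.Algebra.module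
  ((Ext K (ModuleCat (A ⊗[K] Aᵐᵒᵖ)) 2).obj
    (Opposite.op (ModuleCat.of (A ⊗[K] Aᵐᵒᵖ) A))).obj (ModuleCat.of (A ⊗[K] Aᵐᵒᵖ) A)

/-!
By the bar resolution, `HH²` is the space of bilinear `2`-cocycles modulo coboundaries, and a
cocycle `f` on `A` is a coboundary exactly when the square zero extension `A ⊕ A` twisted by `f`
splits. Rewriting with the relations shows that both algebras have a basis of `28` normal words, on
which their multiplications differ only in the product of `α` and `β`.

For `A₁` there are three infinitesimal deformations: `αβ = t e₁`, `ξε = t e₂`, `γδ = t e₃`; then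
`βα + δγ + εξ = t e₄`; and `αβ = t αεξβ`. Three linear forms that vanish on coboundaries separate
them: the characters at `e₃` and `e₄`, and the symmetrizing form. So `3 ≤ dim HH²(A₁)`.

For `A₂`, lift the generators to the twisted extension. The relations then take values in the
ideal, each a combination of closed normal words. Once the coefficients of `e₃` in `γδ` and of `e₄`
in `βα + δγ + εξ` vanish, computing `(βα)²` in two ways in the extension forces those of `e₁` in
`αβ - αδγβ` and of `e₂` in `ξε` to vanish as well, and the remaining coefficients are removed by
changing the lift of the arrows. So those two coefficients determine the class of `f`, and
`dim HH²(A₂) ≤ 2`.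
-/

open CategoryTheory.Limits

section PartialResolution

universe v u

variable {C : Type u} [Category.{v} C] [Abelian C] [EnoughProjectives C]
  {X P₀ P₁ P₂ : C} (d₀ : P₀ ⟶ X) (d₁ : P₁ ⟶ P₀) (d₂ : P₂ ⟶ P₁)
  (w₀ : d₁ ≫ d₀ = 0) (w₁ : d₂ ≫ d₁ = 0)

/-- The prolongation of a two-term complex by a projective cover of its syzygies, in the form
expected by `ChainComplex.mk`. -/
noncomputable def syzygySucc (S : ShortComplex C) :
    Σ' (X₃ : C) (d : X₃ ⟶ S.X₁), d ≫ S.f = 0 :=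
  ⟨Projective.syzygies S.f, Projective.d S.f,
    (Category.assoc (Projective.π (kernel S.f)) (kernel.ι S.f) S.f).trans
      (by rw [kernel.condition, comp_zero]; rfl)⟩

/-- The complex `⋯ ⟶ P₂ ⟶ P₁ ⟶ P₀` prolonging a given beginning by projective syzygies. -/
noncomputable def syzygyComplex : ChainComplex C ℕ :=
  ChainComplex.mk P₀ P₁ P₂ d₁ d₂ w₁ syzygySucc

lemma syzygyComplex_d_one_zero : (syzygyComplex d₁ d₂ w₁).d 1 0 = d₁ :=
  ChainComplex.mk_d_1_0 ..

lemma syzygyComplex_d_two_one : (syzygyComplex d₁ d₂ w₁).d 2 1 = d₂ :=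
  ChainComplex.mk_d_2_1 ..

lemma syzygyComplex_exactAt_add_two (n : ℕ) : (syzygyComplex d₁ d₂ w₁).ExactAt (n + 2) := by
  rw [HomologicalComplex.exactAt_iff' _ (n + 3) (n + 2) (n + 1) (by simp) (by simp)]
  refine (ShortComplex.exact_iff_of_iso ?_).2
    (exact_d_f ((syzygyComplex d₁ d₂ w₁).d (n + 2) (n + 1)))
  exact ShortComplex.isoMk (ChainComplex.mkXIso P₀ P₁ P₂ d₁ d₂ w₁ syzygySucc n)
    (Iso.refl _) (Iso.refl _)
    ((ChainComplex.mk_d P₀ P₁ P₂ d₁ d₂ w₁ syzygySucc n).symm.trans (Category.comp_id _).symm)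
    ((Category.id_comp _).trans (Category.comp_id _).symm)

lemma syzygyComplex_exactAt_one (h : (ShortComplex.mk d₂ d₁ w₁).Exact) :
    (syzygyComplex d₁ d₂ w₁).ExactAt 1 := by
  rw [HomologicalComplex.exactAt_iff' _ 2 1 0 (by simp) (by simp)]
  refine (ShortComplex.exact_iff_of_iso ?_).2 h
  exact ShortComplex.isoMk (Iso.refl _) (Iso.refl _) (Iso.refl _)
    (((Category.id_comp _).trans (syzygyComplex_d_two_one d₁ d₂ w₁).symm).trans
      (Category.comp_id _).symm)
    (((Category.id_comp _).trans (syzygyComplex_d_one_zero d₁ d₂ w₁).symm).trans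
      (Category.comp_id _).symm)

variable [Projective P₀] [Projective P₁] [Projective P₂]

lemma projective_syzygyComplex (n : ℕ) : Projective ((syzygyComplex d₁ d₂ w₁).X n) := by
  match n with
  | 0 => exact ‹Projective P₀›
  | 1 => exact ‹Projective P₁›
  | 2 => exact ‹Projective P₂›
  | n + 3 =>
    exact Projective.of_iso (ChainComplex.mkXIso P₀ P₁ P₂ d₁ d₂ w₁ syzygySucc n).symm
      (Projective.projective_over _)

/-- The projective resolution of `X` prolonging an exact sequence `P₂ ⟶ P₁ ⟶ P₀ ⟶ X ⟶ 0`. -/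
noncomputable def syzygyResolution [Epi d₀] (h₀ : (ShortComplex.mk d₁ d₀ w₀).Exact)
    (h₁ : (ShortComplex.mk d₂ d₁ w₁).Exact) : ProjectiveResolution X where
  complex := syzygyComplex d₁ d₂ w₁
  projective := projective_syzygyComplex d₁ d₂ w₁
  π := (ChainComplex.toSingle₀Equiv _ _).symm
    ⟨d₀, by rw [syzygyComplex_d_one_zero]; exact w₀⟩
  quasiIso := ⟨fun n => by
    match n with
    | 0 =>
      rw [ChainComplex.quasiIsoAt₀_iff, ShortComplex.quasiIso_iff_of_zeros' _ rfl rfl rfl]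
      refine (ShortComplex.exact_and_epi_g_iff_of_iso ?_).2 ⟨h₀, ‹Epi d₀›⟩
      refine ShortComplex.isoMk (Iso.refl _) (Iso.refl _) (Iso.refl _) ?_ ?_
      · exact ((Category.id_comp _).trans (syzygyComplex_d_one_zero d₁ d₂ w₁).symm).trans
          (Category.comp_id _).symm
      · refine (Category.id_comp _).trans (Eq.symm ?_)
        exact (Category.comp_id _).trans (ChainComplex.toSingle₀Equiv_symm_apply_f_zero _ _)
    | 1 =>
      rw [quasiIsoAt_iff_exactAt' (hL := ChainComplex.exactAt_succ_single_obj ..)]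
      exact syzygyComplex_exactAt_one d₁ d₂ w₁ h₁
    | n + 2 =>
      rw [quasiIsoAt_iff_exactAt' (hL := ChainComplex.exactAt_succ_single_obj ..)]
      exact syzygyComplex_exactAt_add_two d₁ d₂ w₁ n⟩

end PartialResolution

lemma shortComplex_f_comp_eq_zero_iff {C : Type*} [Category* C] [Abelian C] {S : ShortComplex C}
    (hS : S.Exact) {Y : C} (φ : S.X₂ ⟶ Y) : S.f ≫ φ = 0 ↔ kernel.ι S.g ≫ φ = 0 := by
  have := hS.epi_kernelLift
  rw [← cancel_epi (kernel.lift S.g S.f S.zero), kernel.lift_ι_assoc, comp_zero]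

section ExtTwo

universe v u

variable {C : Type u} [Category.{v} C] [Abelian C] [EnoughProjectives C]
  {X P₀ P₁ P₂ : C} {d₀ : P₀ ⟶ X} {d₁ : P₁ ⟶ P₀} {d₂ : P₂ ⟶ P₁}
  {w₀ : d₁ ≫ d₀ = 0} {w₁ : d₂ ≫ d₁ = 0}

lemma syzygyComplex_d_comp_eq_zero_iff {Y : C} (φ : P₂ ⟶ Y) :
    (syzygyComplex d₁ d₂ w₁).d 3 2 ≫ (show (syzygyComplex d₁ d₂ w₁).X 2 ⟶ Y from φ) = 0 ↔
      kernel.ι d₂ ≫ φ = 0 := by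
  have h := syzygyComplex_exactAt_add_two d₁ d₂ w₁ 0
  rw [HomologicalComplex.exactAt_iff' _ 3 2 1 (by simp) (by simp)] at h
  refine (shortComplex_f_comp_eq_zero_iff h
    (show (syzygyComplex d₁ d₂ w₁).X 2 ⟶ Y from φ)).trans ?_
  have transport : ∀ d : P₂ ⟶ P₁, d = d₂ → (kernel.ι d ≫ φ = 0 ↔ kernel.ι d₂ ≫ φ = 0) := by
    rintro d rfl; rfl
  exact transport _ (syzygyComplex_d_two_one d₁ d₂ w₁)

variable {R F : Type*} [Ring R] [Linear R C] [AddCommMonoid F] [Module R F]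
  [Projective P₀] [Projective P₁] [Projective P₂] [Epi d₀]

theorem exists_surjective_ext_two (h₀ : (ShortComplex.mk d₁ d₀ w₀).Exact)
    (h₁ : (ShortComplex.mk d₂ d₁ w₁).Exact) {Y : C} (c : F →ₗ[R] (P₂ ⟶ Y))
    (hc : ∀ φ, φ ∈ LinearMap.range c ↔ kernel.ι d₂ ≫ φ = 0) :
    ∃ q : F →ₗ[R] (((Ext R C 2).obj (Opposite.op X)).obj Y),
      Function.Surjective q ∧ ∀ f, q f = 0 ↔ ∃ ψ : P₁ ⟶ Y, d₂ ≫ ψ = c f := by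
  let P := syzygyResolution d₀ d₁ d₂ w₀ w₁ h₀ h₁
  let S := (P.complex.linearYonedaObj R Y).sc' 1 2 3
  let i : ((Ext R C 2).obj (Opposite.op X)).obj Y ≅ S.moduleCatLeftHomologyData.H :=
    P.isoExt 2 Y ≪≫ (P.complex.linearYonedaObj R Y).homologyIsoSc' 1 2 3 (by simp) (by simp)
      ≪≫ S.moduleCatHomologyIso
  let toCocycles : F →ₗ[R] LinearMap.ker S.g.hom := c.codRestrict _ fun f =>
    (syzygyComplex_d_comp_eq_zero_iff (w₁ := w₁) (c f)).2 ((hc _).1 ⟨f, rfl⟩)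
  have surjective_toCocycles : Function.Surjective toCocycles := fun φ => by
    obtain ⟨f, hf⟩ := (hc φ.1).2 ((syzygyComplex_d_comp_eq_zero_iff (w₁ := w₁) φ.1).1 φ.2)
    exact ⟨f, Subtype.ext hf⟩
  let j : (LinearMap.ker S.g.hom ⧸ LinearMap.range S.moduleCatToCycles) ≃ₗ[R]
    (((Ext R C 2).obj (Opposite.op X)).obj Y) := i.symm.toLinearEquiv
  have d_comp (ψ : P₁ ⟶ Y) : P.complex.d 2 1 ≫ (show P.complex.X 1 ⟶ Y from ψ) = d₂ ≫ ψ :=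
    congrArg (fun d : P₂ ⟶ P₁ => d ≫ ψ) (syzygyComplex_d_two_one d₁ d₂ w₁)
  refine ⟨j.toLinearMap ∘ₗ (LinearMap.range S.moduleCatToCycles).mkQ ∘ₗ toCocycles,
    j.surjective.comp ((Submodule.mkQ_surjective _).comp surjective_toCocycles), fun f => ?_⟩
  refine j.map_eq_zero_iff.trans ?_
  rw [LinearMap.comp_apply, Submodule.mkQ_apply, Submodule.Quotient.mk_eq_zero]
  exact ⟨fun ⟨ψ, hψ⟩ => ⟨ψ, (d_comp ψ).symm.trans (congrArg Subtype.val hψ)⟩,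
    fun ⟨ψ, hψ⟩ => ⟨ψ, Subtype.ext ((d_comp ψ).trans hψ)⟩⟩

end ExtTwo

section ExtTwoModule

universe u

variable {k F : Type*} {R X M₀ M₁ M₂ Y : Type u} [Field k] [Ring R] [Algebra k R]
  [AddCommGroup X] [Module R X] [AddCommGroup M₀] [Module R M₀] [AddCommGroup M₁] [Module R M₁]
  [AddCommGroup M₂] [Module R M₂] [AddCommGroup Y] [Module R Y] [Module k Y] [IsScalarTower k R Y]
  [SMulCommClass R k Y] [AddCommMonoid F] [Module k F]

lemma kernel_ι_comp_ofHom_eq_zero_iff (d : M₂ →ₗ[R] M₁) (φ : M₂ →ₗ[R] Y) :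
    kernel.ι (ModuleCat.ofHom d) ≫ ModuleCat.ofHom φ = 0 ↔
      LinearMap.ker d ≤ LinearMap.ker φ := by
  constructor
  · intro h x hx
    let incl : ModuleCat.of R (LinearMap.ker d) ⟶ ModuleCat.of R M₂ :=
      ModuleCat.ofHom (LinearMap.ker d).subtype
    have hincl : incl ≫ ModuleCat.ofHom d = 0 := by ext y; exact y.2
    have hφ : incl ≫ ModuleCat.ofHom φ = 0 := by
      rw [← kernel.lift_ι _ incl hincl, Category.assoc, h, comp_zero]
    exact congrArg (fun f => f.hom (⟨x, hx⟩ : LinearMap.ker d)) hφ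
  · intro h
    ext y
    have hy : d ((kernel.ι (ModuleCat.ofHom d)).hom y) = 0 :=
      congrArg (fun f => f.hom y) (kernel.condition (ModuleCat.ofHom d))
    exact h hy

theorem exists_surjective_ext_two_of_linearMap [Module.Projective R M₀] [Module.Projective R M₁]
    [Module.Projective R M₂] {d₀ : M₀ →ₗ[R] X} {d₁ : M₁ →ₗ[R] M₀} {d₂ : M₂ →ₗ[R] M₁}
    (hd₀ : Function.Surjective d₀) (h₀ : Function.Exact d₁ d₀) (h₁ : Function.Exact d₂ d₁)
    (c : F →ₗ[k] (M₂ →ₗ[R] Y))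
    (hc : ∀ φ, φ ∈ LinearMap.range c ↔ LinearMap.ker d₂ ≤ LinearMap.ker φ) :
    ∃ q : F →ₗ[k] ((Ext k (ModuleCat R) 2).obj
        (Opposite.op (ModuleCat.of R X))).obj (ModuleCat.of R Y),
      Function.Surjective q ∧ ∀ f, q f = 0 ↔ ∃ ψ : M₁ →ₗ[R] Y, ψ ∘ₗ d₂ = c f := by
  have : Epi (ModuleCat.ofHom d₀) := (ModuleCat.epi_iff_surjective _).2 hd₀
  have w₀ : ModuleCat.ofHom d₁ ≫ ModuleCat.ofHom d₀ = 0 := by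
    rw [← ModuleCat.ofHom_comp, h₀.linearMap_comp_eq_zero]; rfl
  have w₁ : ModuleCat.ofHom d₂ ≫ ModuleCat.ofHom d₁ = 0 := by
    rw [← ModuleCat.ofHom_comp, h₁.linearMap_comp_eq_zero]; rfl
  let _ : Module k (ModuleCat.of R M₂ ⟶ ModuleCat.of R Y) := Linear.homModule _ _
  let c' : F →ₗ[k] (ModuleCat.of R M₂ ⟶ ModuleCat.of R Y) :=
    { toFun := fun f => ModuleCat.ofHom (c f)
      map_add' := fun f g => by rw [map_add]; rfl
      map_smul' := fun r f => by
        ext x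
        exact (congrArg (· x) (c.map_smul r f)).trans (algebraMap_smul R r (c f x)).symm }
  obtain ⟨q, hq, hker⟩ := exists_surjective_ext_two (w₀ := w₀) (w₁ := w₁)
    ((ShortComplex.moduleCat_exact_iff _).2 fun x => (h₀ x).1)
    ((ShortComplex.moduleCat_exact_iff _).2 fun x => (h₁ x).1) c' fun φ => by
      refine Iff.trans ?_ ((hc (ModuleCat.Hom.hom φ)).trans
        (kernel_ι_comp_ofHom_eq_zero_iff d₂ (ModuleCat.Hom.hom φ)).symm)
      exact ⟨fun ⟨f, hf⟩ => ⟨f, congrArg ModuleCat.Hom.hom hf⟩,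
        fun ⟨f, hf⟩ => ⟨f, congrArg ModuleCat.ofHom hf⟩⟩
  refine ⟨q, hq, fun f => (hker f).trans ?_⟩
  exact ⟨fun ⟨ψ, hψ⟩ => ⟨ψ.hom, congrArg ModuleCat.Hom.hom hψ⟩,
    fun ⟨ψ, hψ⟩ => ⟨ModuleCat.ofHom ψ, congrArg ModuleCat.ofHom hψ⟩⟩

end ExtTwoModule

section BarResolution

open MulOpposite

variable (k A : Type*) [CommRing k] [Ring A] [Algebra k A]

/-- The enveloping algebra `A ⊗ Aᵐᵒᵖ`, whose modules are the `A`-bimodules. -/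
abbrev Enveloping : Type _ := A ⊗[k] Aᵐᵒᵖ

/-- The regular bimodule structure `(a ⊗ bᵒᵖ) • m = a * m * b`, the one used in `HH2`. -/
noncomputable abbrev envelopingModule : Module (Enveloping k A) A := TensorProduct.Algebra.module

attribute [local instance] envelopingModule

variable {k A}

lemma enveloping_tmul_smul (a b m : A) :
    (a ⊗ₜ[k] op b : Enveloping k A) • m = a * m * b :=
  (mul_assoc a m b).symm

lemma enveloping_smul_tmul {N : Type*} [AddCommMonoid N] [Module k N] (x y : Enveloping k A)
    (n : N) : x • (y ⊗ₜ[k] n) = (x * y) ⊗ₜ[k] n :=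
  TensorProduct.smul_tmul' ..

instance envelopingIsScalarTower : IsScalarTower k (Enveloping k A) A :=
  @IsScalarTower.of_algebraMap_smul k (Enveloping k A) A _ _ _ _ _ fun r m => by
    refine (enveloping_tmul_smul (k := k) (algebraMap k A r) 1 m).trans ?_
    rw [mul_one, Algebra.smul_def]

instance envelopingSMulCommClass : SMulCommClass (Enveloping k A) k A :=
  IsScalarTower.to_smulCommClass'

/-- The bimodule map out of the free bimodule on `N` extending a linear map on `N`. -/
noncomputable def bimoduleLift {N P : Type*} [AddCommMonoid N] [Module k N] [AddCommMonoid P]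
    [Module k P] [Module (Enveloping k A) P] [IsScalarTower k (Enveloping k A) P]
    [SMulCommClass (Enveloping k A) k P] :
    (N →ₗ[k] P) ≃ₗ[k] (Enveloping k A ⊗[k] N →ₗ[Enveloping k A] P) where
  toFun g := TensorProduct.AlgebraTensorModule.lift
    (LinearMap.toSpanSingleton (Enveloping k A) (N →ₗ[k] P) g)
  map_add' f g := by ext; simp
  map_smul' f g := by ext; simp
  invFun φ := φ.restrictScalars k ∘ₗ TensorProduct.mk k (Enveloping k A) N 1
  left_inv g := by ext; simp
  right_inv φ := by ext; simp

lemma bimoduleLift_tmul {N P : Type*} [AddCommMonoid N] [Module k N] [AddCommMonoid P]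
    [Module k P] [Module (Enveloping k A) P] [IsScalarTower k (Enveloping k A) P]
    [SMulCommClass (Enveloping k A) k P] (g : N →ₗ[k] P) (x : Enveloping k A) (n : N) :
    bimoduleLift g (x ⊗ₜ n) = x • g n :=
  rfl

lemma bimoduleLift_tmul_tmul {N : Type*} [AddCommMonoid N] [Module k N] (g : N →ₗ[k] A)
    (p q : A) (n : N) : bimoduleLift g ((p ⊗ₜ[k] op q : Enveloping k A) ⊗ₜ n) = p * g n * q := by
  rw [bimoduleLift_tmul, enveloping_tmul_smul]

variable (k A)

/-- The inclusion `a ↦ a ⊗ 1` of the left factor of the enveloping algebra. -/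
noncomputable def leftInclusion : A →ₗ[k] Enveloping k A :=
  (TensorProduct.mk k A Aᵐᵒᵖ).flip 1

/-- The inclusion `a ↦ 1 ⊗ aᵒᵖ` of the right factor of the enveloping algebra. -/
noncomputable def rightInclusion : A →ₗ[k] Enveloping k A :=
  TensorProduct.mk k A Aᵐᵒᵖ 1 ∘ₗ (opLinearEquiv k).toLinearMap

/-- The augmentation `p ⊗ q ↦ pq` of the bar resolution. -/
noncomputable def barAugmentation : Enveloping k A →ₗ[Enveloping k A] A :=
  LinearMap.toSpanSingleton (Enveloping k A) A 1

/-- The first differential `[a] ↦ a[] - []a` of the bar resolution. -/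
noncomputable def barD₁ : Enveloping k A ⊗[k] A →ₗ[Enveloping k A] Enveloping k A :=
  bimoduleLift (leftInclusion k A - rightInclusion k A)

/-- The second differential `[a|b] ↦ a[b] - [ab] + [a]b` of the bar resolution. -/
noncomputable def barD₂ :
    Enveloping k A ⊗[k] (A ⊗[k] A) →ₗ[Enveloping k A] Enveloping k A ⊗[k] A :=
  bimoduleLift ((leftInclusion k A).rTensor A +
    TensorProduct.mk k (Enveloping k A) A 1 ∘ₗ (-LinearMap.mul' k A) +
    (rightInclusion k A).rTensor A ∘ₗ (TensorProduct.comm k A A).toLinearMap)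

/-- The contraction `p[]q ↦ [p]q` of the bar resolution. -/
noncomputable def barContraction₀ : Enveloping k A →ₗ[k] Enveloping k A ⊗[k] A :=
  ((rightInclusion k A ∘ₗ (opLinearEquiv k).symm.toLinearMap).rTensor A) ∘ₗ
    (TensorProduct.comm k A Aᵐᵒᵖ).toLinearMap

/-- The contraction `p[a]q ↦ [p|a]q` of the bar resolution. -/
noncomputable def barContraction₁ :
    Enveloping k A ⊗[k] A →ₗ[k] Enveloping k A ⊗[k] (A ⊗[k] A) :=
  ((rightInclusion k A ∘ₗ (opLinearEquiv k).symm.toLinearMap).rTensor (A ⊗[k] A)) ∘ₗ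
    (TensorProduct.leftComm k A Aᵐᵒᵖ A).toLinearMap ∘ₗ
      (TensorProduct.assoc k A Aᵐᵒᵖ A).toLinearMap

variable {k A}

lemma barAugmentation_tmul (p q : A) : barAugmentation k A (p ⊗ₜ op q) = p * q := by
  refine (enveloping_tmul_smul p q 1).trans ?_
  rw [mul_one]

lemma barD₁_tmul (p q a : A) :
    barD₁ k A ((p ⊗ₜ op q) ⊗ₜ a) = (p * a) ⊗ₜ op q - p ⊗ₜ op (a * q) := by
  rw [barD₁, bimoduleLift_tmul]
  simp [leftInclusion, rightInclusion, mul_sub]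

lemma barD₂_tmul (p q a b : A) : barD₂ k A ((p ⊗ₜ op q) ⊗ₜ (a ⊗ₜ b)) =
    ((p * a) ⊗ₜ op q) ⊗ₜ b - (p ⊗ₜ op q) ⊗ₜ (a * b) + (p ⊗ₜ op (b * q)) ⊗ₜ a := by
  rw [barD₂, map_add, map_add, LinearMap.add_apply, LinearMap.add_apply, sub_eq_add_neg,
    ← TensorProduct.tmul_neg]
  simp [bimoduleLift_tmul, leftInclusion, rightInclusion, enveloping_smul_tmul]

lemma barContraction₀_tmul (p q : A) :
    barContraction₀ k A (p ⊗ₜ op q) = (1 ⊗ₜ op q) ⊗ₜ p :=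
  rfl

lemma barContraction₁_tmul (p q a : A) :
    barContraction₁ k A ((p ⊗ₜ op q) ⊗ₜ a) = (1 ⊗ₜ op q) ⊗ₜ (p ⊗ₜ a) :=
  rfl

lemma barAugmentation_comp_barD₁ : barAugmentation k A ∘ₗ barD₁ k A = 0 := by
  ext a
  refine (congrArg (barAugmentation k A) (barD₁_tmul 1 1 a)).trans ?_
  rw [map_sub, barAugmentation_tmul, barAugmentation_tmul, mul_one, one_mul, mul_one,
    one_mul, sub_self]
  rfl

lemma barD₁_comp_barD₂ : barD₁ k A ∘ₗ barD₂ k A = 0 := by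
  ext a b
  refine (congrArg (barD₁ k A) (barD₂_tmul 1 1 a b)).trans ?_
  rw [map_add, map_sub, barD₁_tmul, barD₁_tmul, barD₁_tmul]
  simp

lemma barD₁_barContraction₀ (x : Enveloping k A) :
    barD₁ k A (barContraction₀ k A x) + rightInclusion k A (barAugmentation k A x) = x := by
  suffices (barD₁ k A).restrictScalars k ∘ₗ barContraction₀ k A +
      rightInclusion k A ∘ₗ (barAugmentation k A).restrictScalars k = LinearMap.id from
    LinearMap.congr_fun this x
  ext p q
  induction q using MulOpposite.rec' with | _ q
  change barD₁ k A (barContraction₀ k A (p ⊗ₜ op q)) +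
    rightInclusion k A (barAugmentation k A (p ⊗ₜ op q)) = p ⊗ₜ op q
  rw [barContraction₀_tmul, barD₁_tmul, barAugmentation_tmul, one_mul]
  exact sub_add_cancel _ _

lemma barD₂_barContraction₁ (x : Enveloping k A ⊗[k] A) :
    barD₂ k A (barContraction₁ k A x) + barContraction₀ k A (barD₁ k A x) = x := by
  suffices (barD₂ k A).restrictScalars k ∘ₗ barContraction₁ k A +
      barContraction₀ k A ∘ₗ (barD₁ k A).restrictScalars k = LinearMap.id from
    LinearMap.congr_fun this x
  ext p q a
  induction q using MulOpposite.rec' with | _ q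
  change barD₂ k A (barContraction₁ k A ((p ⊗ₜ op q) ⊗ₜ a)) +
    barContraction₀ k A (barD₁ k A ((p ⊗ₜ op q) ⊗ₜ a)) = (p ⊗ₜ op q) ⊗ₜ a
  rw [barContraction₁_tmul, barD₂_tmul, barD₁_tmul, map_sub, barContraction₀_tmul,
    barContraction₀_tmul, one_mul]
  abel

lemma exact_barD₁_barAugmentation : Function.Exact (barD₁ k A) (barAugmentation k A) := by
  refine fun x => ⟨fun hx => ⟨barContraction₀ k A x, ?_⟩, ?_⟩
  · have h := barD₁_barContraction₀ x
    rwa [hx, map_zero, add_zero] at h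
  · rintro ⟨y, rfl⟩
    exact LinearMap.congr_fun barAugmentation_comp_barD₁ y

lemma exact_barD₂_barD₁ : Function.Exact (barD₂ k A) (barD₁ k A) := by
  refine fun x => ⟨fun hx => ⟨barContraction₁ k A x, ?_⟩, ?_⟩
  · have h := barD₂_barContraction₁ x
    rwa [hx, map_zero, add_zero] at h
  · rintro ⟨y, rfl⟩
    exact LinearMap.congr_fun barD₁_comp_barD₂ y

variable (k A)

/-- The coboundary `(δh)(a, b) = a * h b - h (a * b) + h a * b` of a Hochschild `1`-cochain. -/
def hochschildCoboundary : (A →ₗ[k] A) →ₗ[k] (A →ₗ[k] A →ₗ[k] A) where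
  toFun h := LinearMap.mk₂ k (fun a b => a * h b - h (a * b) + h a * b)
    (fun a a' b => by simp only [map_add, add_mul]; abel)
    (fun r a b => by simp only [map_smul, smul_mul_assoc, smul_add, smul_sub])
    (fun a b b' => by simp only [map_add, mul_add]; abel)
    (fun r a b => by simp only [map_smul, mul_smul_comm, smul_add, smul_sub])
  map_add' h h' := by ext a b; simp [mul_add, add_mul]; abel
  map_smul' r h := by ext a b; simp [smul_add, smul_sub]

/-- The Hochschild `2`-cocycles, i.e. the `2`-cochains `f` such that `(x, a) * (y, b) =
(x * y, a * y + x * b + f x y)` is an associative multiplication on `A × A`. -/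
def hochschildCocycles : Submodule k (A →ₗ[k] A →ₗ[k] A) where
  carrier := {f | ∀ a b c, a * f b c + f a (b * c) = f (a * b) c + f a b * c}
  add_mem' {f g} hf hg a b c := by
    simp only [LinearMap.add_apply, mul_add, add_mul]
    rw [add_add_add_comm, hf, hg, add_add_add_comm]
  zero_mem' a b c := by simp
  smul_mem' r f hf a b c := by
    simp only [LinearMap.smul_apply, mul_smul_comm, smul_mul_assoc, ← smul_add, hf a b c]

variable {k A}

lemma hochschildCoboundary_apply (h : A →ₗ[k] A) (a b : A) :
    hochschildCoboundary k A h a b = a * h b - h (a * b) + h a * b :=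
  rfl

/-- The bimodule map on the second term of the bar resolution attached to a bilinear map. -/
noncomputable def barCochain :
    (A →ₗ[k] A →ₗ[k] A) ≃ₗ[k] (Enveloping k A ⊗[k] (A ⊗[k] A) →ₗ[Enveloping k A] A) :=
  (TensorProduct.lift.equiv (.id k) A A A) ≪≫ₗ bimoduleLift

lemma barCochain_tmul (f : A →ₗ[k] A →ₗ[k] A) (p q a b : A) :
    barCochain f ((p ⊗ₜ op q) ⊗ₜ (a ⊗ₜ b)) = p * f a b * q :=
  bimoduleLift_tmul_tmul ..

lemma barCochain_ext {φ ψ : Enveloping k A ⊗[k] (A ⊗[k] A) →ₗ[Enveloping k A] A}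
    (h : ∀ a b, φ (1 ⊗ₜ (a ⊗ₜ b)) = ψ (1 ⊗ₜ (a ⊗ₜ b))) : φ = ψ := by
  ext a b
  exact h a b

lemma bimoduleLift_comp_barD₂ (h : A →ₗ[k] A) :
    bimoduleLift h ∘ₗ barD₂ k A = barCochain (hochschildCoboundary k A h) := by
  refine barCochain_ext fun a b => ?_
  refine (congrArg (bimoduleLift h) (barD₂_tmul 1 1 a b)).trans ?_
  refine Eq.trans ?_ (barCochain_tmul _ 1 1 a b).symm
  rw [map_add, map_sub, bimoduleLift_tmul_tmul, bimoduleLift_tmul_tmul, bimoduleLift_tmul_tmul,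
    hochschildCoboundary_apply]
  simp only [one_mul, mul_one]

lemma barCochain_eq_comp_barD₂ {f : A →ₗ[k] A →ₗ[k] A} (hf : f ∈ hochschildCocycles k A)
    (x : Enveloping k A ⊗[k] (A ⊗[k] A)) :
    barCochain f x = barCochain f (barContraction₁ k A (barD₂ k A x)) := by
  suffices (barCochain f).restrictScalars k =
      (barCochain f).restrictScalars k ∘ₗ barContraction₁ k A ∘ₗ (barD₂ k A).restrictScalars k from
    LinearMap.congr_fun this x
  ext p q a b
  induction q using MulOpposite.rec' with | _ q
  change barCochain f ((p ⊗ₜ op q) ⊗ₜ (a ⊗ₜ b)) =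
    barCochain f (barContraction₁ k A (barD₂ k A ((p ⊗ₜ op q) ⊗ₜ (a ⊗ₜ b))))
  rw [barD₂_tmul, map_add, map_sub, barContraction₁_tmul, barContraction₁_tmul,
    barContraction₁_tmul, map_add, map_sub]
  simp only [barCochain_tmul, one_mul]
  rw [← mul_assoc (f p a), ← sub_mul, ← add_mul, sub_add_eq_add_sub, ← hf, add_sub_cancel_right]

lemma ker_barD₂_le_ker_barCochain_iff (f : A →ₗ[k] A →ₗ[k] A) :
    LinearMap.ker (barD₂ k A) ≤ LinearMap.ker (barCochain f) ↔ f ∈ hochschildCocycles k A := by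
  constructor
  · intro h a b c
    -- The boundary of `[a|b|c]` in the bar resolution.
    let z : Enveloping k A ⊗[k] (A ⊗[k] A) := (a ⊗ₜ op 1) ⊗ₜ (b ⊗ₜ c)
      - (1 ⊗ₜ op 1) ⊗ₜ ((a * b) ⊗ₜ c) + (1 ⊗ₜ op 1) ⊗ₜ (a ⊗ₜ (b * c)) - (1 ⊗ₜ op c) ⊗ₜ (a ⊗ₜ b)
    have hz : barD₂ k A z = 0 := by
      simp only [z, map_sub, map_add, barD₂_tmul, mul_one, one_mul, mul_assoc]
      abel
    have hfz : barCochain f z = 0 := h hz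
    simp only [z, map_sub, map_add, barCochain_tmul, mul_one, one_mul] at hfz
    rw [← sub_eq_zero, ← hfz]
    abel
  · intro hf x hx
    rw [LinearMap.mem_ker, barCochain_eq_comp_barD₂ hf, LinearMap.mem_ker.1 hx, map_zero, map_zero]

end BarResolution

section HochschildCohomology

open MulOpposite

attribute [local instance] envelopingModule

variable {A : Type} [Ring A] [Algebra K A]

theorem exists_surjective_HH2 : ∃ q : hochschildCocycles K A →ₗ[K] HH2 K A,
    Function.Surjective q ∧
      ∀ f, q f = 0 ↔ (f : A →ₗ[K] A →ₗ[K] A) ∈ LinearMap.range (hochschildCoboundary K A) := by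
  let c := barCochain.toLinearMap ∘ₗ (hochschildCocycles K A).subtype
  have hsurj : Function.Surjective (barAugmentation K A) := fun a =>
    ⟨a ⊗ₜ op 1, (barAugmentation_tmul a 1).trans (mul_one a)⟩
  have hc : ∀ φ, φ ∈ LinearMap.range c ↔ LinearMap.ker (barD₂ K A) ≤ LinearMap.ker φ := by
    intro φ
    obtain ⟨f, rfl⟩ := barCochain.surjective φ
    rw [ker_barD₂_le_ker_barCochain_iff]
    exact ⟨fun ⟨g, hg⟩ => barCochain.injective hg ▸ g.2, fun hf => ⟨⟨f, hf⟩, rfl⟩⟩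
  have : Module.Projective (Enveloping K A) (Enveloping K A ⊗[K] A) := inferInstance
  have : Module.Projective (Enveloping K A) (Enveloping K A ⊗[K] (A ⊗[K] A)) := inferInstance
  obtain ⟨q, hq, hker⟩ := exists_surjective_ext_two_of_linearMap (R := Enveloping K A) (X := A)
    (M₀ := Enveloping K A) (M₁ := Enveloping K A ⊗[K] A) (M₂ := Enveloping K A ⊗[K] (A ⊗[K] A))
    (Y := A) hsurj exact_barD₁_barAugmentation exact_barD₂_barD₁ c hc
  refine ⟨q, hq, fun f => (hker f).trans ⟨fun ⟨ψ, hψ⟩ => ?_, fun ⟨h, hh⟩ => ?_⟩⟩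
  · obtain ⟨h, rfl⟩ := bimoduleLift.surjective ψ
    exact ⟨h, barCochain.injective ((bimoduleLift_comp_barD₂ h).symm.trans hψ)⟩
  · exact ⟨bimoduleLift h, (bimoduleLift_comp_barD₂ h).trans (congrArg barCochain hh)⟩

variable {K}

lemma finrank_le_finrank_of_ker_le_ker {M V W : Type*} [AddCommMonoid M] [Module K M]
    [AddCommGroup V] [Module K V] [AddCommGroup W] [Module K W] [FiniteDimensional K V]
    {f : M →ₗ[K] V} {g : M →ₗ[K] W} (h : LinearMap.ker f ≤ LinearMap.ker g)
    (hg : Function.Surjective g) : Module.finrank K W ≤ Module.finrank K V := by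
  let _ : AddCommGroup M := Module.addCommMonoidToAddCommGroup K
  have : Module.Finite K (M ⧸ LinearMap.ker f) := .equiv f.quotKerEquivRange.symm
  calc Module.finrank K W ≤ Module.finrank K (M ⧸ LinearMap.ker f) :=
        LinearMap.finrank_le_finrank_of_surjective
          (f := (LinearMap.ker f).liftQ g h) fun w =>
            let ⟨m, hm⟩ := hg w
            ⟨Submodule.Quotient.mk m, hm⟩
    _ = Module.finrank K (LinearMap.range f) := f.quotKerEquivRange.finrank_eq
    _ ≤ Module.finrank K V := Submodule.finrank_le _

theorem finrank_HH2_le {V : Type*} [AddCommGroup V] [Module K V] [FiniteDimensional K V]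
    (Λ : hochschildCocycles K A →ₗ[K] V)
    (hΛ : ∀ f, Λ f = 0 → (f : A →ₗ[K] A →ₗ[K] A) ∈ LinearMap.range (hochschildCoboundary K A)) :
    Module.finrank K (HH2 K A) ≤ Module.finrank K V := by
  obtain ⟨q, hq, hker⟩ := exists_surjective_HH2 K (A := A)
  exact finrank_le_finrank_of_ker_le_ker (f := Λ) (fun f hf => (hker f).2 (hΛ f hf)) hq

theorem finrank_le_finrank_HH2 [FiniteDimensional K A] {V : Type*} [AddCommGroup V] [Module K V]
    (Λ : (A →ₗ[K] A →ₗ[K] A) →ₗ[K] V) (hΛ : Λ ∘ₗ hochschildCoboundary K A = 0)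
    (hsurj : Function.Surjective (Λ ∘ₗ (hochschildCocycles K A).subtype)) :
    Module.finrank K V ≤ Module.finrank K (HH2 K A) := by
  obtain ⟨q, hq, hker⟩ := exists_surjective_HH2 K (A := A)
  have : FiniteDimensional K (HH2 K A) := Module.Finite.of_surjective q hq
  refine finrank_le_finrank_of_ker_le_ker (f := q) (fun f hf => ?_) hsurj
  obtain ⟨h, hh⟩ := (hker f).1 hf
  exact (congrArg Λ hh).symm.trans (LinearMap.congr_fun hΛ h)

end HochschildCohomology

section Presentations

instance : DecidablePred IsVertex := fun _ => inferInstanceAs (Decidable (_ ∨ _))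

instance : Fintype QGen := ⟨{e1, e2, e3, e4, α, β, γ, δ, ε, ξ}, fun x => by cases x <;> decide⟩

lemma isArrow_of_not_isVertex {x : QGen} (hx : ¬IsVertex x) : IsArrow x := by
  cases x <;> simp_all [IsVertex, IsArrow]

lemma src_of_isVertex {v : QGen} (hv : IsVertex v) : src v = v := by
  rcases hv with rfl | rfl | rfl | rfl <;> rfl

lemma tgt_of_isVertex {v : QGen} (hv : IsVertex v) : tgt v = v := by
  rcases hv with rfl | rfl | rfl | rfl <;> rfl

lemma isVertex_src (x : QGen) : IsVertex (src x) := by cases x <;> decide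

lemma isVertex_tgt (x : QGen) : IsVertex (tgt x) := by cases x <;> decide

/-- The family `g` in a ring satisfies the relations between the vertices and arrows in the path
algebra of the quiver. -/
structure PathRelations {A : Type*} [Ring A] (g : QGen → A) : Prop where
  vertex_mul : ∀ v x, IsVertex v → g v * g x = if v = src x then g x else 0
  mul_vertex : ∀ x v, IsVertex v → g x * g v = if v = tgt x then g x else 0
  sum_vertex : g e1 + g e2 + g e3 + g e4 = 1

/-- The family `g` in a ring satisfies the defining relations of `A₁` (for `κ = false`) or of `A₂`
(for `κ = true`). The last two relations follow from the others for `κ = false`. -/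
structure Relations (κ : Bool) {A : Type*} [Ring A] (g : QGen → A) : Prop
    extends PathRelations g where
  α_mul_β : g α * g β = if κ then g α * g δ * g γ * g β else 0
  ξ_mul_ε : g ξ * g ε = 0
  γ_mul_δ : g γ * g δ = 0
  mesh : g β * g α + g δ * g γ + g ε * g ξ = 0
  α_mul_β_mul_α : g α * g β * g α = 0
  β_mul_α_mul_β : g β * g α * g β = 0

/-- The algebra `A` is presented by the generators `g` and the relations of `A₁` (for `κ = false`)
or `A₂` (for `κ = true`), i.e. `g` is a copy of the canonical generators of that algebra. -/
structure IsPresentation (κ : Bool) {A : Type} [Ring A] [Algebra K A] (g : QGen → A) : Prop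
    extends Relations κ g where
  exists_lift : ∀ {B : Type} [Ring B] [Algebra K B] {g' : QGen → B}, Relations κ g' →
    ∃ φ : A →ₐ[K] B, ∀ x, φ (g x) = g' x
  adjoin_eq_top : Algebra.adjoin K (Set.range g) = ⊤

variable {K}

lemma PathRelations.src_mul {A : Type*} [Ring A] {g : QGen → A} (h : PathRelations g) (x : QGen) :
    g (src x) * g x = g x := by
  rw [h.vertex_mul _ _ (isVertex_src x), if_pos rfl]

lemma PathRelations.src_mul_mul {A : Type*} [Ring A] {g : QGen → A} (h : PathRelations g)
    (x : QGen) (y : A) : g (src x) * (g x * y) = g x * y := by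
  rw [← mul_assoc, h.src_mul]

lemma PathRelations.mul_tgt {A : Type*} [Ring A] {g : QGen → A} (h : PathRelations g) (x : QGen) :
    g x * g (tgt x) = g x := by
  rw [h.mul_vertex _ _ (isVertex_tgt x), if_pos rfl]

lemma PathRelations.map {A B : Type*} [Ring A] [Ring B] {g : QGen → A} (h : PathRelations g)
    (φ : A →+* B) : PathRelations (fun x => φ (g x)) where
  vertex_mul v x hv := by rw [← map_mul, h.vertex_mul v x hv, apply_ite φ, map_zero]
  mul_vertex x v hv := by rw [← map_mul, h.mul_vertex x v hv, apply_ite φ, map_zero]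
  sum_vertex := by rw [← map_add, ← map_add, ← map_add, h.sum_vertex, map_one]

lemma pathRelations_gen : PathRelations (gen K) where
  vertex_mul v x hv := by
    have h : gen K v * gen K x =
        RingQuot.mkAlgHom K (PathRel K) (FreeAlgebra.ι K v * FreeAlgebra.ι K x) :=
      (map_mul _ _ _).symm
    by_cases hx : IsVertex x
    · rw [h, RingQuot.mkAlgHom_rel K (.vertex_mul v x hv hx), src_of_isVertex hx, apply_ite
        (RingQuot.mkAlgHom K (PathRel K)), map_zero]
      split_ifs with hvx
      exacts [hvx ▸ rfl, rfl]
    · split_ifs with hvx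
      · subst hvx
        exact h.trans (RingQuot.mkAlgHom_rel K (.src_mul x (isArrow_of_not_isVertex hx)))
      · rw [h, RingQuot.mkAlgHom_rel K (.orth_mul v x hv (isArrow_of_not_isVertex hx) hvx),
          map_zero]
  mul_vertex x v hv := by
    have h : gen K x * gen K v =
        RingQuot.mkAlgHom K (PathRel K) (FreeAlgebra.ι K x * FreeAlgebra.ι K v) :=
      (map_mul _ _ _).symm
    by_cases hx : IsVertex x
    · rw [h, RingQuot.mkAlgHom_rel K (.vertex_mul x v hx hv), tgt_of_isVertex hx, apply_ite
        (RingQuot.mkAlgHom K (PathRel K)), map_zero]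
      exact if_congr eq_comm rfl rfl
    · split_ifs with hvx
      · subst hvx
        exact h.trans (RingQuot.mkAlgHom_rel K (.mul_tgt x (isArrow_of_not_isVertex hx)))
      · rw [h, RingQuot.mkAlgHom_rel K (.mul_orth x v (isArrow_of_not_isVertex hx) hv hvx),
          map_zero]
  sum_vertex := by
    have h := RingQuot.mkAlgHom_rel K (PathRel.vertex_sum (K := K))
    rw [map_add, map_add, map_add, map_one] at h
    exact h

lemma PathRelations.exists_lift {B : Type*} [Ring B] [Algebra K B] {g : QGen → B}
    (h : PathRelations g) : ∃ φ : PathAlg K →ₐ[K] B, ∀ x, φ (gen K x) = g x := by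
  refine ⟨RingQuot.liftAlgHom K ⟨FreeAlgebra.lift K g, fun x y hxy => ?_⟩, fun x => ?_⟩
  · induction hxy with
    | vertex_mul v w hv hw =>
      have := h.vertex_mul v w hv
      rw [src_of_isVertex hw] at this
      simp only [map_mul, FreeAlgebra.lift_ι_apply, this]
      split_ifs with hvw <;> simp [hvw]
    | vertex_sum => simpa using h.sum_vertex
    | src_mul a ha => simpa using h.vertex_mul _ a (isVertex_src a)
    | mul_tgt a ha => simpa using h.mul_vertex a _ (isVertex_tgt a)
    | orth_mul v a hv ha hne => simpa [hne] using h.vertex_mul v a hv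
    | mul_orth a v ha hv hne => simpa [hne] using h.mul_vertex a v hv
  · rw [gen, RingQuot.liftAlgHom_mkAlgHom_apply, FreeAlgebra.lift_ι_apply]

lemma adjoin_range_gen : Algebra.adjoin K (Set.range (gen K)) = ⊤ := by
  have h : Set.range (gen K) =
      RingQuot.mkAlgHom K (PathRel K) '' Set.range (FreeAlgebra.ι K) := (Set.range_comp _ _)
  rw [h, ← AlgHom.map_adjoin, FreeAlgebra.adjoin_range_ι, Algebra.map_top,
    AlgHom.range_eq_top]
  exact RingQuot.mkAlgHom_surjective K _

section Quotient

variable (J : TwoSidedIdeal (PathAlg K)) [Algebra K J.ringCon.Quotient]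
  (hJ : ∀ r : K, algebraMap K J.ringCon.Quotient r =
    RingCon.mk' J.ringCon (algebraMap K (PathAlg K) r))

/-- The quotient map from the path algebra as an algebra homomorphism. -/
def quotientMap : PathAlg K →ₐ[K] J.ringCon.Quotient :=
  { RingCon.mk' J.ringCon with commutes' := fun r => (hJ r).symm }

lemma quotientMap_surjective : Function.Surjective (quotientMap J hJ) := RingCon.mk'_surjective _

lemma quotientMap_eq_zero {x : PathAlg K} (hx : x ∈ J) : quotientMap J hJ x = 0 :=
  (RingCon.eq _).2 ((TwoSidedIdeal.mem_iff J x).1 hx)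

lemma exists_comp_quotientMap_eq {B : Type*} [Ring B] [Algebra K B] (φ : PathAlg K →ₐ[K] B)
    (h : J ≤ TwoSidedIdeal.ker φ) :
    ∃ ψ : J.ringCon.Quotient →ₐ[K] B, ∀ x, ψ (quotientMap J hJ x) = φ x := by
  have hle : J.ringCon ≤ RingCon.ker φ.toRingHom := by
    intro x y hxy
    have hφ := (TwoSidedIdeal.mem_ker φ).1 (h ((TwoSidedIdeal.rel_iff J x y).1 hxy))
    rwa [map_sub, sub_eq_zero] at hφ
  refine ⟨{ RingCon.lift J.ringCon φ.toRingHom hle with commutes' := fun r => ?_ }, fun x => rfl⟩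
  rw [hJ]
  exact φ.commutes r

end Quotient

lemma isPresentation_quotientMap {κ : Bool} (s : Set (PathAlg K))
    [Algebra K (TwoSidedIdeal.span s).ringCon.Quotient]
    (hJ : ∀ r : K, algebraMap K (TwoSidedIdeal.span s).ringCon.Quotient r =
      RingCon.mk' (TwoSidedIdeal.span s).ringCon (algebraMap K (PathAlg K) r))
    (hs : ∀ {B : Type} [Ring B] [Algebra K B] (φ : PathAlg K →ₐ[K] B),
      (∀ x ∈ s, φ x = 0) ↔ Relations κ (fun x => φ (gen K x))) :
    IsPresentation K κ (fun x => quotientMap _ hJ (gen K x)) where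
  toRelations := (hs _).1 fun x hx => quotientMap_eq_zero _ hJ (TwoSidedIdeal.subset_span hx)
  exists_lift := by
    intro B _ _ g' hg'
    obtain ⟨φ, hφ⟩ := hg'.toPathRelations.exists_lift (K := K)
    obtain rfl : (fun x => φ (gen K x)) = g' := funext hφ
    have hle : TwoSidedIdeal.span s ≤ TwoSidedIdeal.ker φ :=
      TwoSidedIdeal.span_le.2 fun x hx => (TwoSidedIdeal.mem_ker φ).2 ((hs φ).2 hg' x hx)
    obtain ⟨ψ, hψ⟩ := exists_comp_quotientMap_eq _ hJ φ hle
    exact ⟨ψ, fun x => hψ _⟩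
  adjoin_eq_top := by
    have h := Set.range_comp (quotientMap _ hJ) (gen K)
    rw [Function.comp_def] at h
    rw [h, ← AlgHom.map_adjoin, adjoin_range_gen, Algebra.map_top, AlgHom.range_eq_top]
    exact quotientMap_surjective _ hJ

variable (K)

theorem exists_isPresentation_A1 : ∃ g : QGen → AlgA1 K, IsPresentation K false g := by
  refine ⟨_, isPresentation_quotientMap _ (fun _ => rfl) fun φ => ⟨fun h => ?_, fun h => ?_⟩⟩
  · simp only [Set.mem_insert_iff, Set.mem_singleton_iff, forall_eq_or_imp, forall_eq, map_add,
      map_mul] at h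
    obtain ⟨hαβ, hξε, hγδ, hmesh⟩ := h
    exact { toPathRelations := pathRelations_gen.map φ.toRingHom
            α_mul_β := hαβ
            ξ_mul_ε := hξε
            γ_mul_δ := hγδ
            mesh := hmesh
            α_mul_β_mul_α := by rw [hαβ, zero_mul]
            β_mul_α_mul_β := by rw [mul_assoc, hαβ, mul_zero] }
  · simp only [Set.mem_insert_iff, Set.mem_singleton_iff, forall_eq_or_imp, forall_eq, map_add,
      map_mul]
    exact ⟨h.α_mul_β, h.ξ_mul_ε, h.γ_mul_δ, h.mesh⟩

theorem exists_isPresentation_A2 : ∃ g : QGen → AlgA2 K, IsPresentation K true g := by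
  refine ⟨_, isPresentation_quotientMap _ (fun _ => rfl) fun φ => ⟨fun h => ?_, fun h => ?_⟩⟩
  · simp only [Set.mem_insert_iff, Set.mem_singleton_iff, forall_eq_or_imp, forall_eq, map_add,
      map_sub, map_mul, sub_eq_zero] at h
    obtain ⟨hαβ, hξε, hγδ, hmesh, hαβα, hβαβ⟩ := h
    exact { toPathRelations := pathRelations_gen.map φ.toRingHom
            α_mul_β := hαβ
            ξ_mul_ε := hξε
            γ_mul_δ := hγδ
            mesh := hmesh
            α_mul_β_mul_α := hαβα
            β_mul_α_mul_β := hβαβ }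
  · simp only [Set.mem_insert_iff, Set.mem_singleton_iff, forall_eq_or_imp, forall_eq, map_add,
      map_sub, map_mul, sub_eq_zero]
    exact ⟨h.α_mul_β, h.ξ_mul_ε, h.γ_mul_δ, h.mesh, h.α_mul_β_mul_α, h.β_mul_α_mul_β⟩

end Presentations

section ListSums

variable {ι ι' M N : Type*} [AddCommMonoid M] [AddCommMonoid N]

lemma map_sum_map_eq_sum_map_flatMap (φ : M →+ N) {f : ι → M} {f' : ι' → N} {T : ι → List ι'}
    {L : List ι} (h : ∀ i ∈ L, φ (f i) = ((T i).map f').sum) :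
    φ (L.map f).sum = ((L.flatMap T).map f').sum := by
  induction L with
  | nil => simp
  | cons i L ih =>
    rw [List.map_cons, List.sum_cons, map_add, h i List.mem_cons_self,
      ih fun j hj => h j (List.mem_cons_of_mem i hj), List.flatMap_cons, List.map_append,
      List.sum_append]

variable [DecidableEq ι]

/-- Two lists have the same entries when these are counted modulo two. Lists of words encode linear
combinations in characteristic two, and this is equality of the encoded combinations. -/
def EqModTwo (L L' : List ι) : Prop := ∀ i ∈ L ++ L', Even ((L ++ L').count i)

instance (L L' : List ι) : Decidable (EqModTwo L L') :=
  inferInstanceAs (Decidable (∀ i ∈ L ++ L', Even ((L ++ L').count i)))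

lemma EqModTwo.sum_map_eq (R : Type*) {M : Type*} [Ring R] [CharP R 2] [AddCommGroup M] [Module R M]
    {L L' : List ι} (h : EqModTwo L L') (f : ι → M) : (L.map f).sum = (L'.map f).sum := by
  have hsmul (n : ℕ) (hn : Even n) (m : M) : n • m = 0 := by
    rw [← Nat.cast_smul_eq_nsmul R, (CharP.cast_eq_zero_iff R 2 n).2 hn.two_dvd, zero_smul]
  have hadd : (L.map f).sum + (L'.map f).sum = 0 := by
    rw [← List.sum_append, ← List.map_append, Finset.sum_list_map_count]
    exact Finset.sum_eq_zero fun i hi => hsmul _ (h i (List.mem_toFinset.1 hi)) _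
  have hself : (L'.map f).sum + (L'.map f).sum = 0 := by rw [← two_nsmul, hsmul 2 even_two]
  exact add_right_cancel (hadd.trans hself.symm)

end ListSums

section Words

/-- The words forming a basis of both algebras: the trivial paths and the paths which are not
rewritten by `reduce`. -/
def normalWords : List (List QGen) :=
  [[e1], [e2], [e3], [e4], [α], [β], [γ], [δ], [ε], [ξ],
    [α, δ], [α, ε], [ξ, β], [ξ, δ], [γ, β], [γ, ε], [δ, γ], [ε, ξ],
    [α, ε, ξ], [ξ, δ, γ], [γ, ε, ξ], [δ, γ, ε], [ε, ξ, β], [ε, ξ, δ],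
    [α, ε, ξ, β], [ξ, δ, γ, ε], [γ, ε, ξ, δ], [ε, ξ, δ, γ]]

/-- The index type of the basis of normal words. -/
abbrev NormalWord : Type := {w // w ∈ normalWords}

/-- The normal form, as a sum of normal words, of a word of arrows all of whose proper suffixes are
normal. -/
def reduce (κ : Bool) : List QGen → List (List QGen)
  | [β, α] => [[δ, γ], [ε, ξ]]
  | [β, α, δ] => [[ε, ξ, δ]]
  | [β, α, ε] => [[δ, γ, ε]]
  | [β, α, ε, ξ] => [[ε, ξ, δ, γ]]
  | [α, δ, γ] => [[α, ε, ξ]]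
  | [δ, γ, β] => [[ε, ξ, β]]
  | [δ, γ, ε, ξ] => [[ε, ξ, δ, γ]]
  | [α, β] => if κ then [[α, ε, ξ, β]] else []
  | w => if w ∈ normalWords then [w] else []

/-- The normal form of the product of a generator and a normal word. -/
def leftMul (κ : Bool) (x : QGen) (w : List QGen) : List (List QGen) :=
  if IsVertex x then if x = src (w.headD x) then [w] else []
  else if w = [tgt x] then [[x]]
  else reduce κ (x :: w)

/-- The normal form of the product of a word and a sum of normal words. -/
def wordMul (κ : Bool) (u : List QGen) (L : List (List QGen)) : List (List QGen) :=
  u.foldr (fun x L => L.flatMap (leftMul κ x)) L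

/-- The value of a word at a family of elements of a ring. -/
def wordProd {A : Type*} [Ring A] (g : QGen → A) (w : List QGen) : A := (w.map g).prod

/-- The value of a sum of words at a family of elements of a ring. -/
def wordSum {A : Type*} [Ring A] (g : QGen → A) (L : List (List QGen)) : A :=
  (L.map (wordProd g)).sum

lemma ne_nil_of_mem_normalWords {w : List QGen} (hw : w ∈ normalWords) : w ≠ [] := by
  rintro rfl
  exact absurd hw (by decide)

set_option maxRecDepth 100000 in
lemma mem_normalWords_of_mem_leftMul {κ : Bool} {x : QGen} {w u : List QGen}
    (hw : w ∈ normalWords) (hu : u ∈ leftMul κ x w) : u ∈ normalWords := by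
  have h : ∀ κ x, ∀ w ∈ normalWords, ∀ u ∈ leftMul κ x w, u ∈ normalWords := by decide +kernel
  exact h κ x w hw u hu

lemma subset_normalWords_wordMul {κ : Bool} {u : List QGen} {L : List (List QGen)}
    (hL : L ⊆ normalWords) : wordMul κ u L ⊆ normalWords := by
  induction u with
  | nil => exact hL
  | cons x u ih =>
    intro v hv
    obtain ⟨w, hw, hvw⟩ := List.mem_flatMap.1 hv
    exact mem_normalWords_of_mem_leftMul (ih hw) hvw

variable {A : Type*} [Ring A] {g : QGen → A}

@[simp] lemma wordProd_nil : wordProd g [] = 1 := rfl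

@[simp] lemma wordProd_cons (x : QGen) (w : List QGen) :
    wordProd g (x :: w) = g x * wordProd g w := by
  rw [wordProd, List.map_cons, List.prod_cons, wordProd]

@[simp] lemma wordSum_nil : wordSum g [] = 0 := rfl

@[simp] lemma wordSum_cons (w : List QGen) (L : List (List QGen)) :
    wordSum g (w :: L) = wordProd g w + wordSum g L := by
  rw [wordSum, List.map_cons, List.sum_cons, wordSum]

lemma wordSum_append (L L' : List (List QGen)) :
    wordSum g (L ++ L') = wordSum g L + wordSum g L' := by
  rw [wordSum, List.map_append, List.sum_append, wordSum, wordSum]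

lemma map_wordProd {B F : Type*} [Ring B] [FunLike F A B] [RingHomClass F A B] (φ : F)
    (w : List QGen) : φ (wordProd g w) = wordProd (fun x => φ (g x)) w := by
  rw [wordProd, map_list_prod, List.map_map, wordProd, Function.comp_def]

end Words

section Rewriting

variable {A : Type*} [Ring A] {κ : Bool} {g : QGen → A}

lemma PathRelations.mul_eq_zero (h : PathRelations g) {x y : QGen} (hxy : tgt x ≠ src y) :
    g x * g y = 0 := by
  rw [← h.mul_tgt x, mul_assoc, h.vertex_mul _ _ (isVertex_tgt x), if_neg hxy, mul_zero]

lemma Relations.ξ_mul_ε_mul (h : Relations κ g) (y : A) : g ξ * (g ε * y) = 0 := by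
  rw [← mul_assoc, h.ξ_mul_ε, zero_mul]

lemma Relations.γ_mul_δ_mul (h : Relations κ g) (y : A) : g γ * (g δ * y) = 0 := by
  rw [← mul_assoc, h.γ_mul_δ, zero_mul]

section CharTwo

variable [CharP A 2]

lemma Relations.β_mul_α_mul (h : Relations κ g) (y : A) :
    g β * (g α * y) = g δ * (g γ * y) + g ε * (g ξ * y) := by
  have hβα : g β * g α = g δ * g γ + g ε * g ξ := by
    rw [← CharTwo.add_eq_zero, ← add_assoc, h.mesh]
  rw [← mul_assoc, hβα, add_mul, mul_assoc, mul_assoc]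

lemma Relations.α_mul_δ_mul_γ_mul (h : Relations κ g) (y : A) :
    g α * (g δ * (g γ * y)) = g α * (g ε * (g ξ * y)) := by
  rw [← CharTwo.add_eq_zero, ← mul_add, ← h.β_mul_α_mul, ← mul_assoc, ← mul_assoc,
    h.α_mul_β_mul_α, zero_mul]

lemma Relations.δ_mul_γ_mul_β_mul (h : Relations κ g) (y : A) :
    g δ * (g γ * (g β * y)) = g ε * (g ξ * (g β * y)) := by
  rw [← CharTwo.add_eq_zero, ← h.β_mul_α_mul, ← mul_assoc, ← mul_assoc, h.β_mul_α_mul_β, zero_mul]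

lemma Relations.δ_mul_γ_mul_ε_mul_ξ_mul (h : Relations κ g) (y : A) :
    g δ * (g γ * (g ε * (g ξ * y))) = g ε * (g ξ * (g δ * (g γ * y))) := by
  have hβα : g β * (g α * (g β * (g α * y))) = 0 := by
    rw [← mul_assoc, ← mul_assoc, h.β_mul_α_mul_β, zero_mul]
  simp only [h.β_mul_α_mul, mul_add, h.γ_mul_δ_mul, h.ξ_mul_ε_mul, mul_zero, zero_add, add_zero,
    CharTwo.add_eq_zero] at hβα
  exact hβα.symm

lemma Relations.α_mul_β_mul (h : Relations κ g) (y : A) :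
    g α * (g β * y) = if κ then g α * (g ε * (g ξ * (g β * y))) else 0 := by
  rw [← mul_assoc, h.α_mul_β]
  split_ifs
  · simp only [mul_assoc, h.α_mul_δ_mul_γ_mul]
  · rw [zero_mul]

lemma Relations.α_mul_ε_mul_ξ_mul_δ_mul (h : Relations κ g) (y : A) :
    g α * (g ε * (g ξ * (g δ * y))) = 0 := by
  rw [← h.α_mul_δ_mul_γ_mul, h.γ_mul_δ_mul, mul_zero, mul_zero]

lemma Relations.γ_mul_ε_mul_ξ_mul_β_mul (h : Relations κ g) (y : A) :
    g γ * (g ε * (g ξ * (g β * y))) = 0 := by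
  rw [← h.δ_mul_γ_mul_β_mul, h.γ_mul_δ_mul]

lemma Relations.γ_mul_ε_mul_ξ_mul_δ_mul_γ_mul (h : Relations κ g) (y : A) :
    g γ * (g ε * (g ξ * (g δ * (g γ * y)))) = 0 := by
  rw [← h.δ_mul_γ_mul_ε_mul_ξ_mul, h.γ_mul_δ_mul]

lemma Relations.ε_mul_ξ_mul_δ_mul_γ_mul_ε_mul (h : Relations κ g) (y : A) :
    g ε * (g ξ * (g δ * (g γ * (g ε * y)))) = 0 := by
  rw [← h.δ_mul_γ_mul_ε_mul_ξ_mul, h.ξ_mul_ε_mul, mul_zero, mul_zero, mul_zero]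

end CharTwo

lemma PathRelations.vertex_mul_wordProd (h : PathRelations g) {v : QGen} (hv : IsVertex v)
    {w : List QGen} (hw : w ∈ normalWords) : g v * wordProd g w = wordSum g (leftMul κ v w) := by
  obtain ⟨x, w, rfl⟩ := List.exists_cons_of_ne_nil (ne_nil_of_mem_normalWords hw)
  rw [leftMul, if_pos hv, List.headD_cons, wordProd_cons, ← mul_assoc, h.vertex_mul v x hv]
  split_ifs <;> simp

set_option maxRecDepth 100000 in
lemma reduce_of_mem {w : List QGen} (hw : w ∈ normalWords) : reduce κ w = [w] := by
  have h : ∀ κ, ∀ w ∈ normalWords, reduce κ w = [w] := by decide +kernel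
  exact h κ w hw

/-- The composable words `x :: w`, for an arrow `x` and a normal word `w`, which are not normal. -/
def reducibleWords : List (List QGen) :=
  [[α, β], [α, δ, γ], [α, δ, γ, ε], [α, ε, ξ, δ], [α, ε, ξ, δ, γ],
    [β, α], [β, α, δ], [β, α, ε], [β, α, ε, ξ], [β, α, ε, ξ, β],
    [γ, δ], [γ, δ, γ], [γ, δ, γ, ε], [γ, ε, ξ, β], [γ, ε, ξ, δ, γ],
    [δ, γ, β], [δ, γ, ε, ξ], [δ, γ, ε, ξ, δ], [ε, ξ, δ, γ, ε],
    [ξ, ε], [ξ, ε, ξ], [ξ, ε, ξ, β], [ξ, ε, ξ, δ], [ξ, ε, ξ, δ, γ]]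

set_option maxRecDepth 100000 in
lemma cons_mem_reducibleWords {x : QGen} (hx : ¬IsVertex x) {w : List QGen} (hw : w ∈ normalWords)
    (hxw : w ≠ [tgt x]) (hn : x :: w ∉ normalWords) (hc : tgt x = src (w.headD x)) :
    x :: w ∈ reducibleWords := by
  have h : ∀ x, ¬IsVertex x → ∀ w ∈ normalWords, w ≠ [tgt x] → x :: w ∉ normalWords →
    tgt x = src (w.headD x) → x :: w ∈ reducibleWords := by decide +kernel
  exact h x hx w hw hxw hn hc

set_option maxRecDepth 100000 in
lemma reduce_cons_of_ne {x : QGen} {w : List QGen} (hx : ¬IsVertex x) (hw : w ∈ normalWords)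
    (hxw : w ≠ [tgt x]) (hc : tgt x ≠ src (w.headD x)) : reduce κ (x :: w) = [] := by
  have h : ∀ κ x, ¬IsVertex x → ∀ w ∈ normalWords, w ≠ [tgt x] → tgt x ≠ src (w.headD x) →
    reduce κ (x :: w) = [] := by decide +kernel
  exact h κ x hx w hw hxw hc

lemma Relations.wordProd_of_mem_reducibleWords [CharP A 2] (h : Relations κ g) {w : List QGen}
    (hw : w ∈ reducibleWords) : wordProd g w = wordSum g (reduce κ w) := by
  rw [reducibleWords, List.mem_cons] at hw
  rcases hw with rfl | hw
  · cases κ <;> simp [-mul_one, reduce, h.α_mul_β_mul]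
  simp only [List.mem_cons, List.not_mem_nil, or_false] at hw
  rcases hw with rfl | rfl | rfl | rfl | rfl | rfl | rfl | rfl | rfl | rfl | rfl | rfl | rfl | rfl |
    rfl | rfl | rfl | rfl | rfl | rfl | rfl | rfl | rfl <;>
  simp [-mul_one, reduce, normalWords, h.ξ_mul_ε_mul, h.γ_mul_δ_mul, h.β_mul_α_mul,
    h.α_mul_δ_mul_γ_mul, h.δ_mul_γ_mul_β_mul, h.δ_mul_γ_mul_ε_mul_ξ_mul,
    h.α_mul_ε_mul_ξ_mul_δ_mul, h.γ_mul_ε_mul_ξ_mul_β_mul, h.γ_mul_ε_mul_ξ_mul_δ_mul_γ_mul,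
    h.ε_mul_ξ_mul_δ_mul_γ_mul_ε_mul]

lemma Relations.mul_wordProd [CharP A 2] (h : Relations κ g) (x : QGen) {w : List QGen}
    (hw : w ∈ normalWords) : g x * wordProd g w = wordSum g (leftMul κ x w) := by
  by_cases hx : IsVertex x
  · exact h.vertex_mul_wordProd hx hw
  rw [leftMul, if_neg hx]
  split_ifs with hxw
  · rw [hxw, wordProd_cons, wordProd_nil, mul_one, h.mul_tgt]
    simp
  by_cases hn : x :: w ∈ normalWords
  · rw [reduce_of_mem hn]
    simp
  by_cases hc : tgt x = src (w.headD x)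
  · rw [← wordProd_cons]
    exact h.wordProd_of_mem_reducibleWords (cons_mem_reducibleWords hx hw hxw hn hc)
  · rw [reduce_cons_of_ne hx hw hxw hc]
    obtain ⟨y, w, rfl⟩ := List.exists_cons_of_ne_nil (ne_nil_of_mem_normalWords hw)
    rw [List.headD_cons] at hc
    rw [wordProd_cons, ← mul_assoc, h.mul_eq_zero hc, zero_mul, wordSum_nil]

lemma Relations.mul_wordSum [CharP A 2] (h : Relations κ g) (x : QGen) {L : List (List QGen)}
    (hL : L ⊆ normalWords) : g x * wordSum g L = wordSum g (L.flatMap (leftMul κ x)) :=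
  map_sum_map_eq_sum_map_flatMap (AddMonoidHom.mulLeft (g x)) fun _ hw => h.mul_wordProd x (hL hw)

lemma Relations.wordProd_mul_wordSum [CharP A 2] (h : Relations κ g) (u : List QGen)
    {L : List (List QGen)} (hL : L ⊆ normalWords) :
    wordProd g u * wordSum g L = wordSum g (wordMul κ u L) := by
  induction u with
  | nil => rw [wordProd_nil, one_mul, wordMul, List.foldr_nil]
  | cons x u ih =>
    rw [wordProd_cons, mul_assoc, ih, h.mul_wordSum x (subset_normalWords_wordMul hL), wordMul,
      wordMul, List.foldr_cons]

lemma Relations.wordProd_mul_wordProd [CharP A 2] (h : Relations κ g) (u : List QGen)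
    {w : List QGen} (hw : w ∈ normalWords) :
    wordProd g u * wordProd g w = wordSum g (wordMul κ u [w]) := by
  rw [← h.wordProd_mul_wordSum u (List.cons_subset.2 ⟨hw, List.nil_subset _⟩), wordSum_cons,
    wordSum_nil, add_zero]

lemma Relations.wordSum_mul_wordProd [CharP A 2] (h : Relations κ g) (L : List (List QGen))
    {w : List QGen} (hw : w ∈ normalWords) :
    wordSum g L * wordProd g w = wordSum g (L.flatMap fun u => wordMul κ u [w]) :=
  map_sum_map_eq_sum_map_flatMap (AddMonoidHom.mulRight (wordProd g w)) fun u _ =>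
    h.wordProd_mul_wordProd u hw

end Rewriting

section Representation

/-- The basis vector of a normal word. -/
def wordVec (u : List QGen) : NormalWord → K := fun v => if u = v.1 then 1 else 0

/-- The action of a generator on combinations of normal words by left multiplication. -/
noncomputable def genAction (κ : Bool) (x : QGen) : Module.End K (NormalWord → K) :=
  (Pi.basisFun K NormalWord).constr K fun w => ((leftMul κ x w).map (wordVec K)).sum

variable {K} {κ : Bool}

lemma wordVec_val (w : NormalWord) : wordVec K w.1 = Pi.basisFun K NormalWord w := by
  ext v
  rw [Pi.basisFun_apply, Pi.single_apply, wordVec]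
  exact if_congr (Subtype.ext_iff.symm.trans eq_comm) rfl rfl

lemma genAction_wordVec (x : QGen) {w : List QGen} (hw : w ∈ normalWords) :
    genAction K κ x (wordVec K w) = ((leftMul κ x w).map (wordVec K)).sum := by
  rw [wordVec_val ⟨w, hw⟩, genAction, Module.Basis.constr_basis]

lemma wordProd_genAction_apply (u : List QGen) {L : List (List QGen)} (hL : L ⊆ normalWords) :
    wordProd (genAction K κ) u (L.map (wordVec K)).sum =
      ((wordMul κ u L).map (wordVec K)).sum := by
  induction u with
  | nil => rfl
  | cons x u ih =>
    rw [wordProd_cons, Module.End.mul_apply, ih]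
    exact map_sum_map_eq_sum_map_flatMap (genAction K κ x).toAddMonoidHom fun w hw =>
      genAction_wordVec x (subset_normalWords_wordMul hL hw)

lemma wordSum_genAction_apply (F : List (List QGen)) {w : List QGen} (hw : w ∈ normalWords) :
    wordSum (genAction K κ) F (wordVec K w) =
      ((F.flatMap fun u => wordMul κ u [w]).map (wordVec K)).sum :=
  map_sum_map_eq_sum_map_flatMap (LinearMap.applyₗ (wordVec K w)).toAddMonoidHom fun u _ => by
    simpa using wordProd_genAction_apply (K := K) (κ := κ) u (L := [w]) (by simpa using hw)

variable [CharP K 2]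

lemma wordSum_genAction_eq {F F' : List (List QGen)}
    (h : ∀ w ∈ normalWords, EqModTwo (F.flatMap fun u => wordMul κ u [w])
      (F'.flatMap fun u => wordMul κ u [w])) :
    wordSum (genAction K κ) F = wordSum (genAction K κ) F' := by
  refine (Pi.basisFun K NormalWord).ext fun w => ?_
  rw [← wordVec_val, wordSum_genAction_apply F w.2, wordSum_genAction_apply F' w.2,
    (h w.1 w.2).sum_map_eq K]

set_option maxRecDepth 100000 in
lemma pathRelations_genAction : PathRelations (genAction K κ) where
  vertex_mul v x hv := by
    have h : ∀ κ v, IsVertex v → ∀ x, ∀ w ∈ normalWords,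
        EqModTwo ([[v, x]].flatMap fun u => wordMul κ u [w])
          ((if v = src x then [[x]] else []).flatMap fun u => wordMul κ u [w]) := by
      decide +kernel
    simpa [apply_ite (wordSum (genAction K κ))] using
      wordSum_genAction_eq (K := K) (h κ v hv x)
  mul_vertex x v hv := by
    have h : ∀ κ v, IsVertex v → ∀ x, ∀ w ∈ normalWords,
        EqModTwo ([[x, v]].flatMap fun u => wordMul κ u [w])
          ((if v = tgt x then [[x]] else []).flatMap fun u => wordMul κ u [w]) := by
      decide +kernel
    simpa [apply_ite (wordSum (genAction K κ))] using
      wordSum_genAction_eq (K := K) (h κ v hv x)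
  sum_vertex := by
    have h : ∀ κ, ∀ w ∈ normalWords,
        EqModTwo ([[e1], [e2], [e3], [e4]].flatMap fun u => wordMul κ u [w])
          ([[]].flatMap fun u => wordMul κ u [w]) := by
      decide +kernel
    simpa [← add_assoc] using wordSum_genAction_eq (K := K) (h κ)

set_option maxRecDepth 100000 in
lemma relations_genAction : Relations κ (genAction K κ) where
  toPathRelations := pathRelations_genAction
  α_mul_β := by
    have h : ∀ κ : Bool, ∀ w ∈ normalWords, EqModTwo ([[α, β]].flatMap fun u => wordMul κ u [w])
        ((if κ then [[α, δ, γ, β]] else []).flatMap fun u => wordMul κ u [w]) := by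
      decide +kernel
    simpa [apply_ite (wordSum (genAction K κ)), mul_assoc] using
      wordSum_genAction_eq (K := K) (h κ)
  ξ_mul_ε := by
    have h : ∀ κ, ∀ w ∈ normalWords, EqModTwo ([[ξ, ε]].flatMap fun u => wordMul κ u [w])
        ([].flatMap fun u => wordMul κ u [w]) := by decide +kernel
    simpa using wordSum_genAction_eq (K := K) (h κ)
  γ_mul_δ := by
    have h : ∀ κ, ∀ w ∈ normalWords, EqModTwo ([[γ, δ]].flatMap fun u => wordMul κ u [w])
        ([].flatMap fun u => wordMul κ u [w]) := by decide +kernel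
    simpa using wordSum_genAction_eq (K := K) (h κ)
  mesh := by
    have h : ∀ κ, ∀ w ∈ normalWords,
        EqModTwo ([[β, α], [δ, γ], [ε, ξ]].flatMap fun u => wordMul κ u [w])
          ([].flatMap fun u => wordMul κ u [w]) := by decide +kernel
    simpa [← add_assoc] using wordSum_genAction_eq (K := K) (h κ)
  α_mul_β_mul_α := by
    have h : ∀ κ, ∀ w ∈ normalWords, EqModTwo ([[α, β, α]].flatMap fun u => wordMul κ u [w])
        ([].flatMap fun u => wordMul κ u [w]) := by decide +kernel
    simpa [mul_assoc] using wordSum_genAction_eq (K := K) (h κ)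
  β_mul_α_mul_β := by
    have h : ∀ κ, ∀ w ∈ normalWords, EqModTwo ([[β, α, β]].flatMap fun u => wordMul κ u [w])
        ([].flatMap fun u => wordMul κ u [w]) := by decide +kernel
    simpa [mul_assoc] using wordSum_genAction_eq (K := K) (h κ)

end Representation

section Basis

lemma eq_top_of_adjoin_eq_top_of_mul_mem {R A : Type*} [CommSemiring R] [Semiring A] [Algebra R A]
    {s : Set A} (hs : Algebra.adjoin R s = ⊤) {S : Submodule R A} (hone : 1 ∈ S)
    (hmul : ∀ x ∈ s, ∀ y ∈ S, x * y ∈ S) : S = ⊤ := by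
  have h (a : A) (ha : a ∈ Algebra.adjoin R s) : ∀ y ∈ S, a * y ∈ S := by
    induction ha using Algebra.adjoin_induction with
    | mem x hx => exact hmul x hx
    | algebraMap r => exact fun y hy => by rw [← Algebra.smul_def]; exact S.smul_mem r hy
    | add a b _ _ ha hb => exact fun y hy => by rw [add_mul]; exact S.add_mem (ha y hy) (hb y hy)
    | mul a b _ _ ha hb => exact fun y hy => by rw [mul_assoc]; exact ha _ (hb y hy)
  exact Submodule.eq_top_iff'.2 fun a => by simpa using h a (hs ▸ Algebra.mem_top) 1 hone

variable {K} [CharP K 2] {A : Type} [Ring A] [Algebra K A] {κ : Bool} {g : QGen → A}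

namespace IsPresentation

lemma nontrivial (h : IsPresentation K κ g) : Nontrivial A := by
  obtain ⟨ρ, -⟩ := h.exists_lift (relations_genAction (K := K))
  have : Nonempty NormalWord := ⟨⟨[e1], by decide⟩⟩
  exact ρ.toRingHom.domain_nontrivial

lemma charP (h : IsPresentation K κ g) : CharP A 2 :=
  have := h.nontrivial
  charP_of_injective_algebraMap (algebraMap K A).injective 2

set_option maxRecDepth 100000 in
lemma linearIndependent (h : IsPresentation K κ g) :
    LinearIndependent K fun w : NormalWord => wordProd g w.1 := by
  obtain ⟨ρ, hρ⟩ := h.exists_lift (relations_genAction (K := K))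
  have hvec : ∀ κ, ∀ w ∈ normalWords, EqModTwo (wordMul κ w [[e1], [e2], [e3], [e4]]) [w] := by
    decide +kernel
  refine LinearIndependent.of_comp ((LinearMap.applyₗ
    (([[e1], [e2], [e3], [e4]].map (wordVec K)).sum)).comp ρ.toLinearMap) ?_
  convert (Pi.basisFun K NormalWord).linearIndependent using 1
  funext w
  rw [← wordVec_val, Function.comp_apply, LinearMap.comp_apply, LinearMap.applyₗ_apply_apply,
    AlgHom.toLinearMap_apply, map_wordProd, funext hρ, wordProd_genAction_apply w.1 (by decide),
    (hvec κ w.1 w.2).sum_map_eq K, List.map_singleton, List.sum_singleton]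

lemma span_range_eq_top (h : IsPresentation K κ g) :
    Submodule.span K (Set.range fun w : NormalWord => wordProd g w.1) = ⊤ := by
  have := h.charP
  have hsum {L : List (List QGen)} (hL : L ⊆ normalWords) :
      wordSum g L ∈ Submodule.span K (Set.range fun w : NormalWord => wordProd g w.1) := by
    refine list_sum_mem fun a ha => ?_
    obtain ⟨w, hw, rfl⟩ := List.mem_map.1 ha
    exact Submodule.subset_span ⟨⟨w, hL hw⟩, rfl⟩
  refine eq_top_of_adjoin_eq_top_of_mul_mem h.adjoin_eq_top ?_ ?_
  · have hone : wordSum g [[e1], [e2], [e3], [e4]] = 1 := by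
      simpa [← add_assoc] using h.sum_vertex
    exact hone ▸ hsum (by decide)
  · rintro _ ⟨x, rfl⟩ y hy
    induction hy using Submodule.span_induction with
    | mem y hy =>
      obtain ⟨w, rfl⟩ := hy
      rw [h.mul_wordProd x w.2]
      exact hsum fun u => mem_normalWords_of_mem_leftMul w.2
    | zero => rw [mul_zero]; exact Submodule.zero_mem _
    | add y z _ _ hy hz => rw [mul_add]; exact Submodule.add_mem _ hy hz
    | smul r y _ hy => rw [mul_smul_comm]; exact Submodule.smul_mem _ r hy

/-- The basis of an algebra presented by the relations of `A₁` or `A₂` given by the normal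
words. -/
noncomputable def basis (h : IsPresentation K κ g) : Module.Basis NormalWord K A :=
  Module.Basis.mk h.linearIndependent h.span_range_eq_top.ge

lemma basis_apply (h : IsPresentation K κ g) (w : NormalWord) : h.basis w = wordProd g w.1 :=
  Module.Basis.mk_apply _ _ w

lemma finiteDimensional (h : IsPresentation K κ g) : FiniteDimensional K A :=
  h.basis.finiteDimensional_of_finite

end IsPresentation

end Basis

section Deformations

/-- Three infinitesimal deformations of `A₁`: the words in `deform k x w` sum to the coefficient of
`t` in the product of the generator `x` and the normal word `w`, in the deformation over `K[t]/(t²)`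
with `αβ = t e₁`, `ξε = t e₂`, `γδ = t e₃` (for `k = 0`), `βα + δγ + εξ = t e₄` (for `k = 1`), or
`αβ = t αεξβ` (for `k = 2`; this is the direction of `A₂`). -/
def deform : Fin 3 → QGen → List QGen → List (List QGen)
  | 0, α, [β] => [[e1]]
  | 0, α, [δ, γ] => [[α]]
  | 0, β, α :: δ :: w => [δ :: w]
  | 0, β, α :: ε :: w => [ε :: w]
  | 0, γ, [δ] => [[e3]]
  | 0, γ, [δ, γ] => [[γ]]
  | 0, γ, [δ, γ, ε] => [[γ, ε]]
  | 0, γ, [ε, ξ, δ, γ] => [[γ, ε, ξ]]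
  | 0, δ, [γ, β] => [[β]]
  | 0, δ, [γ, ε, ξ, δ] => [[ε, ξ, δ]]
  | 0, ε, [ξ, δ, γ, ε] => [[δ, γ, ε]]
  | 0, ξ, [ε] => [[e2]]
  | 0, ξ, ε :: ξ :: w => [ξ :: w]
  | 1, α, [δ, γ] => [[α]]
  | 1, α, [δ, γ, ε] => [[α, ε]]
  | 1, α, [ε, ξ, δ] => [[α, δ]]
  | 1, α, [ε, ξ, δ, γ] => [[α, ε, ξ]]
  | 1, β, [α] => [[e4]]
  | 1, β, [α, δ] => [[δ]]
  | 1, β, [α, ε] => [[ε]]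
  | 1, β, [α, ε, ξ] => [[ε, ξ]]
  | 1, γ, [ε, ξ, β] => [[γ, β]]
  | 1, δ, [γ, β] => [[β]]
  | 2, α, [β] => [[α, ε, ξ, β]]
  | _, _, _ => []

/-- The coefficient of `t` in the product of the words `u` and `w` in the `k`-th deformation; the
argument `w` comes first. -/
def cocycleWords (k : Fin 3) (w : List QGen) : List QGen → List (List QGen)
  | [] => []
  | x :: u => (cocycleWords k w u).flatMap (leftMul false x) ++
      (wordMul false u [w]).flatMap (deform k x)

lemma cocycleWords_singleton (k : Fin 3) (w : List QGen) (x : QGen) :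
    cocycleWords k w [x] = deform k x w := by
  rw [cocycleWords, cocycleWords, wordMul, List.foldr_nil, List.flatMap_singleton,
    List.flatMap_nil, List.nil_append]

lemma singleton_mem_normalWords (x : QGen) : [x] ∈ normalWords := by cases x <;> decide

set_option maxRecDepth 100000 in
lemma cocycleWords_subset_normalWords {k : Fin 3} {u w : List QGen} (hu : u ∈ normalWords)
    (hw : w ∈ normalWords) : cocycleWords k w u ⊆ normalWords := by
  have h : ∀ k, ∀ u ∈ normalWords, ∀ w ∈ normalWords, ∀ v ∈ cocycleWords k w u,
    v ∈ normalWords := by decide +kernel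
  exact h k u hu w hw

lemma mem_hochschildCocycles_of_adjoin_eq_top {k A : Type} [Field k] [Ring A] [Algebra k A]
    {s : Set A} (hs : Algebra.adjoin k s = ⊤) {f : A →ₗ[k] A →ₗ[k] A} (hf : f 1 = 0)
    (h : ∀ x ∈ s, ∀ b c, x * f b c + f x (b * c) = f (x * b) c + f x b * c) :
    f ∈ hochschildCocycles k A := by
  intro a
  have ha : a ∈ Algebra.adjoin k s := hs ▸ Algebra.mem_top
  induction ha using Algebra.adjoin_induction with
  | mem x hx => exact h x hx
  | algebraMap r => simp [Algebra.algebraMap_eq_smul_one, hf]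
  | add a b _ _ ha hb =>
    intro c d
    simp only [add_mul, map_add, LinearMap.add_apply]
    linear_combination (norm := abel) ha c d + hb c d
  | mul a b _ _ ha hb =>
    intro c d
    have hleft : a * (b * f c d) + a * f b (c * d) = a * f (b * c) d + a * (f b c * d) := by
      rw [← mul_add, hb, mul_add]
    have hright : a * f b c * d + f a (b * c) * d = f (a * b) c * d + f a b * c * d := by
      rw [← add_mul, ha, add_mul]
    have h₁ := ha b (c * d)
    have h₂ := ha (b * c) d
    simp only [mul_assoc] at hright h₁ h₂ ⊢
    linear_combination (norm := abel) hleft - h₁ + h₂ + hright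

variable {K} [CharP K 2] {A : Type} [Ring A] [Algebra K A] {g : QGen → A}

namespace IsPresentation

/-- The Hochschild cocycle of the `k`-th deformation. -/
noncomputable def cocycle (h : IsPresentation K false g) (k : Fin 3) : A →ₗ[K] A →ₗ[K] A :=
  h.basis.constr K fun u => h.basis.constr K fun w => wordSum g (cocycleWords k w.1 u.1)

lemma cocycle_wordProd (h : IsPresentation K false g) (k : Fin 3) {u w : List QGen}
    (hu : u ∈ normalWords) (hw : w ∈ normalWords) :
    h.cocycle k (wordProd g u) (wordProd g w) = wordSum g (cocycleWords k w u) := by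
  rw [cocycle, ← h.basis_apply ⟨u, hu⟩, ← h.basis_apply ⟨w, hw⟩, Module.Basis.constr_basis,
    Module.Basis.constr_basis]

lemma cocycle_gen_wordProd (h : IsPresentation K false g) (k : Fin 3) (x : QGen) {w : List QGen}
    (hw : w ∈ normalWords) : h.cocycle k (g x) (wordProd g w) = wordSum g (deform k x w) := by
  simpa [cocycleWords_singleton] using h.cocycle_wordProd k (singleton_mem_normalWords x) hw

lemma cocycle_gen_wordSum (h : IsPresentation K false g) (k : Fin 3) (x : QGen)
    {L : List (List QGen)} (hL : L ⊆ normalWords) :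
    h.cocycle k (g x) (wordSum g L) = wordSum g (L.flatMap (deform k x)) :=
  map_sum_map_eq_sum_map_flatMap (h.cocycle k (g x)).toAddMonoidHom fun _ hw =>
    h.cocycle_gen_wordProd k x (hL hw)

lemma cocycle_wordSum_wordProd (h : IsPresentation K false g) (k : Fin 3) {L : List (List QGen)}
    (hL : L ⊆ normalWords) {w : List QGen} (hw : w ∈ normalWords) :
    h.cocycle k (wordSum g L) (wordProd g w) = wordSum g (L.flatMap (cocycleWords k w)) :=
  map_sum_map_eq_sum_map_flatMap ((h.cocycle k).flip (wordProd g w)).toAddMonoidHom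
    fun _ hu => h.cocycle_wordProd k (hL hu) hw

lemma cocycle_one (h : IsPresentation K false g) (k : Fin 3) : h.cocycle k 1 = 0 := by
  have hvertex (v : QGen) (hv : IsVertex v) : h.cocycle k (g v) = 0 := by
    refine h.basis.ext fun w => ?_
    have hdeform : deform k v w.1 = [] := by
      rcases hv with rfl | rfl | rfl | rfl <;> fin_cases k <;> rfl
    rw [h.basis_apply, h.cocycle_gen_wordProd k v w.2, hdeform, wordSum_nil, LinearMap.zero_apply]
  rw [← h.sum_vertex, map_add, map_add, map_add, hvertex e1 (by decide), hvertex e2 (by decide),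
    hvertex e3 (by decide), hvertex e4 (by decide), add_zero, add_zero, add_zero]

set_option maxRecDepth 100000 in
lemma cocycle_mem (h : IsPresentation K false g) (k : Fin 3) :
    h.cocycle k ∈ hochschildCocycles K A := by
  have := h.charP
  refine mem_hochschildCocycles_of_adjoin_eq_top h.adjoin_eq_top (h.cocycle_one k) ?_
  rintro _ ⟨x, rfl⟩
  suffices hbasis : (h.cocycle k).compr₂ (LinearMap.mulLeft K (g x)) +
      (LinearMap.mul K A).compr₂ (h.cocycle k (g x)) =
      h.cocycle k ∘ₗ LinearMap.mulLeft K (g x) + LinearMap.mul K A ∘ₗ h.cocycle k (g x) from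
    fun b c => LinearMap.congr_fun₂ hbasis b c
  refine h.basis.ext fun u => h.basis.ext fun w => ?_
  have hwords : ∀ k, ∀ x, ∀ u ∈ normalWords, ∀ w ∈ normalWords,
      EqModTwo ((cocycleWords k w u).flatMap (leftMul false x) ++
          (wordMul false u [w]).flatMap (deform k x))
        ((leftMul false x u).flatMap (cocycleWords k w) ++
          (deform k x u).flatMap fun v => wordMul false v [w]) := by
    decide +kernel
  have hw : [w.1] ⊆ normalWords := List.cons_subset.2 ⟨w.2, List.nil_subset _⟩
  simp only [LinearMap.add_apply, LinearMap.compr₂_apply, LinearMap.comp_apply,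
    LinearMap.mulLeft_apply, LinearMap.mul_apply', h.basis_apply]
  rw [h.cocycle_wordProd k u.2 w.2, h.mul_wordSum x (cocycleWords_subset_normalWords u.2 w.2),
    h.wordProd_mul_wordProd u.1 w.2, h.cocycle_gen_wordSum k x (subset_normalWords_wordMul hw),
    h.mul_wordProd x u.2,
    h.cocycle_wordSum_wordProd k (fun _ => mem_normalWords_of_mem_leftMul u.2) w.2,
    h.cocycle_gen_wordProd k x u.2, h.wordSum_mul_wordProd _ w.2, ← wordSum_append,
    ← wordSum_append]
  exact (hwords k x u.1 u.2 w.1 w.2).sum_map_eq K _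

end IsPresentation

end Deformations

section PairSums

/-- The sum of the values of a bilinear map at a list of pairs of generators. For a cocycle it is
the first order part of the sum of the products of these pairs in the corresponding deformation. -/
def pairSum (K : Type*) [Field K] {A : Type*} [Ring A] [Algebra K A] (g : QGen → A)
    (L : List (QGen × QGen)) : (A →ₗ[K] A →ₗ[K] A) →ₗ[K] A where
  toFun f := (L.map fun p => f (g p.1) (g p.2)).sum
  map_add' f f' := by simp only [LinearMap.add_apply, List.sum_map_add]
  map_smul' r f := by
    simp only [LinearMap.smul_apply, RingHom.id_apply, List.smul_sum, List.map_map,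
      Function.comp_def]

variable {K} {A : Type} [Ring A] [Algebra K A] {g : QGen → A} {L : List (QGen × QGen)}

lemma pairSum_hochschildCoboundary (hL : (L.map fun p => g p.1 * g p.2).sum = 0) (f : A →ₗ[K] A) :
    pairSum K g L (hochschildCoboundary K A f) =
      (L.map fun p => g p.1 * f (g p.2)).sum + (L.map fun p => f (g p.1) * g p.2).sum := by
  have hf : (L.map fun p => f (g p.1 * g p.2)).sum = 0 := by
    rw [← map_zero f, ← hL, map_list_sum, List.map_map, Function.comp_def]
  have hsub : pairSum K g L (hochschildCoboundary K A f) +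
      (L.map fun p => f (g p.1 * g p.2)).sum =
        (L.map fun p => g p.1 * f (g p.2)).sum + (L.map fun p => f (g p.1) * g p.2).sum := by
    rw [pairSum, LinearMap.coe_mk, AddHom.coe_mk, ← List.sum_map_add, ← List.sum_map_add]
    refine congrArg List.sum (List.map_congr_left fun p _ => ?_)
    rw [hochschildCoboundary_apply]
    abel
  rw [← hsub, hf, add_zero]

lemma character_pairSum_hochschildCoboundary (χ : A →ₐ[K] K)
    (hχ : ∀ p ∈ L, χ (g p.1) = 0 ∧ χ (g p.2) = 0)
    (hL : (L.map fun p => g p.1 * g p.2).sum = 0) (f : A →ₗ[K] A) :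
    χ (pairSum K g L (hochschildCoboundary K A f)) = 0 := by
  rw [pairSum_hochschildCoboundary hL, map_add, map_list_sum, map_list_sum, List.map_map,
    List.map_map, List.sum_eq_zero, List.sum_eq_zero, add_zero] <;>
  · simp only [List.mem_map, Function.comp_apply, map_mul]
    rintro _ ⟨p, hp, rfl⟩
    simp [hχ p hp]

lemma trace_pairSum_hochschildCoboundary [CharP K 2] (τ : A →ₗ[K] K)
    (hτ : ∀ x a, τ (g x * a) = τ (a * g x)) (hswap : (L.map Prod.swap).Perm L)
    (hL : (L.map fun p => g p.1 * g p.2).sum = 0) (f : A →ₗ[K] A) :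
    τ (pairSum K g L (hochschildCoboundary K A f)) = 0 := by
  have hsymm : (L.map fun p => τ (g p.1 * f (g p.2))).sum =
      (L.map fun p => τ (f (g p.1) * g p.2)).sum := by
    rw [← (hswap.map _).sum_eq, List.map_map]
    exact congrArg List.sum (List.map_congr_left fun p _ => hτ _ _)
  rw [pairSum_hochschildCoboundary hL, map_add, map_list_sum, map_list_sum, List.map_map,
    List.map_map, Function.comp_def, Function.comp_def, hsymm, CharTwo.add_self_eq_zero]

end PairSums

section LowerBound

variable {K} {A : Type} [Ring A] [Algebra K A] {κ : Bool} {g : QGen → A}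

lemma relations_indicator {v : QGen} (hv : IsVertex v) :
    Relations κ fun x => if x = v then (1 : K) else 0 where
  vertex_mul u x hu := by
    rcases hu with rfl | rfl | rfl | rfl <;> rcases hv with rfl | rfl | rfl | rfl <;>
      cases x <;> simp [src]
  mul_vertex x u hu := by
    rcases hu with rfl | rfl | rfl | rfl <;> rcases hv with rfl | rfl | rfl | rfl <;>
      cases x <;> simp [tgt]
  sum_vertex := by rcases hv with rfl | rfl | rfl | rfl <;> simp
  α_mul_β := by rcases hv with rfl | rfl | rfl | rfl <;> simp
  ξ_mul_ε := by rcases hv with rfl | rfl | rfl | rfl <;> simp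
  γ_mul_δ := by rcases hv with rfl | rfl | rfl | rfl <;> simp
  mesh := by rcases hv with rfl | rfl | rfl | rfl <;> simp
  α_mul_β_mul_α := by rcases hv with rfl | rfl | rfl | rfl <;> simp
  β_mul_α_mul_β := by rcases hv with rfl | rfl | rfl | rfl <;> simp

namespace IsPresentation

lemma exists_character (h : IsPresentation K κ g) {v : QGen} (hv : IsVertex v) :
    ∃ χ : A →ₐ[K] K, ∀ x, χ (g x) = if x = v then 1 else 0 :=
  h.exists_lift (relations_indicator hv)

variable [CharP K 2]

/-- The linear form summing the coefficients of the four normal words of length `4`. It is a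
symmetrizing form of `A₁`. -/
noncomputable def socleForm (h : IsPresentation K κ g) : A →ₗ[K] K :=
  h.basis.constr K fun w => if w.1.length = 4 then 1 else 0

lemma socleForm_wordSum (h : IsPresentation K κ g) {L : List (List QGen)} (hL : L ⊆ normalWords) :
    h.socleForm (wordSum g L) = (L.countP fun w => w.length = 4 : ℕ) := by
  induction L with
  | nil => simp
  | cons w L ih =>
    obtain ⟨hw, hL⟩ := List.cons_subset.1 hL
    rw [wordSum_cons, map_add, ih hL, ← h.basis_apply ⟨w, hw⟩, socleForm,
      Module.Basis.constr_basis, List.countP_cons]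
    push_cast
    rw [add_comm]
    simp

set_option maxRecDepth 100000 in
lemma socleForm_mul_comm (h : IsPresentation K false g) (x : QGen) (a : A) :
    h.socleForm (g x * a) = h.socleForm (a * g x) := by
  have := h.charP
  have hcount : ∀ x, ∀ w ∈ normalWords,
      (leftMul false x w).countP (fun w => w.length = 4) =
        (wordMul false w [[x]]).countP (fun w => w.length = 4) := by
    decide +kernel
  have hx := singleton_mem_normalWords x
  have hgx : g x = wordProd g [x] := by rw [wordProd_cons, wordProd_nil, mul_one]
  suffices hbasis : h.socleForm ∘ₗ LinearMap.mulLeft K (g x) =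
      h.socleForm ∘ₗ LinearMap.mulRight K (g x) from LinearMap.congr_fun hbasis a
  refine h.basis.ext fun w => ?_
  rw [LinearMap.comp_apply, LinearMap.comp_apply, LinearMap.mulLeft_apply,
    LinearMap.mulRight_apply, h.basis_apply, h.mul_wordProd x w.2, hgx,
    h.wordProd_mul_wordProd w.1 hx,
    h.socleForm_wordSum fun _ => mem_normalWords_of_mem_leftMul w.2,
    h.socleForm_wordSum (subset_normalWords_wordMul (List.cons_subset.2 ⟨hx, List.nil_subset _⟩)),
    hcount x w.1 w.2]

lemma pairSum_cocycle (h : IsPresentation K false g) (L : List (QGen × QGen)) (k : Fin 3) :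
    pairSum K g L (h.cocycle k) = wordSum g (L.flatMap fun p => deform k p.1 [p.2]) := by
  refine map_sum_map_eq_sum_map_flatMap (AddMonoidHom.id A) fun p _ => ?_
  simpa [wordSum] using h.cocycle_gen_wordProd k p.1 (singleton_mem_normalWords p.2)

theorem three_le_finrank_HH2 (h : IsPresentation K false g) :
    3 ≤ Module.finrank K (HH2 K A) := by
  have := h.finiteDimensional
  obtain ⟨χ₃, hχ₃⟩ := h.exists_character (v := e3) (by decide)
  obtain ⟨χ₄, hχ₄⟩ := h.exists_character (v := e4) (by decide)
  let mesh := [(β, α), (δ, γ), (ε, ξ)]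
  have hmesh : (mesh.map fun p => g p.1 * g p.2).sum = 0 := by
    simpa [mesh, ← add_assoc] using h.mesh
  let Λ : (A →ₗ[K] A →ₗ[K] A) →ₗ[K] (Fin 3 → K) := LinearMap.pi
    ![χ₃.toLinearMap ∘ₗ pairSum K g [(γ, δ)], χ₄.toLinearMap ∘ₗ pairSum K g mesh,
      h.socleForm ∘ₗ pairSum K g (mesh ++ mesh.map Prod.swap)]
  have hcoboundary : Λ ∘ₗ hochschildCoboundary K A = 0 := by
    refine LinearMap.ext fun f => funext fun i => ?_
    fin_cases i
    · exact character_pairSum_hochschildCoboundary χ₃ (by simp [hχ₃]) (by simpa using h.γ_mul_δ) f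
    · exact character_pairSum_hochschildCoboundary χ₄ (by simp [mesh, hχ₄]) hmesh f
    · refine trace_pairSum_hochschildCoboundary h.socleForm h.socleForm_mul_comm (by decide) ?_ f
      rw [List.map_append, List.sum_append, hmesh]
      simp [mesh, h.α_mul_β, h.γ_mul_δ, h.ξ_mul_ε]
  have hcocycle (k : Fin 3) : Λ (h.cocycle k) = Pi.single k 1 := by
    have hsocle : h.socleForm (pairSum K g (mesh ++ mesh.map Prod.swap) (h.cocycle k)) =
        if k = 2 then 1 else 0 := by
      rw [h.pairSum_cocycle, h.socleForm_wordSum]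
      · fin_cases k <;> simp [mesh, deform]
      · fin_cases k <;> decide
    ext i
    fin_cases i
    · fin_cases k <;> simp [Λ, h.pairSum_cocycle, deform, hχ₃]
    · fin_cases k <;> simp [Λ, h.pairSum_cocycle, deform, mesh, hχ₄]
    · simpa [Λ, Pi.single_apply, eq_comm] using hsocle
  have hle := finrank_le_finrank_HH2 Λ hcoboundary fun v =>
    ⟨∑ k, v k • ⟨h.cocycle k, h.cocycle_mem k⟩, by
      simp [hcocycle, ← pi_eq_sum_univ' v]⟩
  simpa using hle

end IsPresentation

end LowerBound

section SquareZeroExtension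

/-- `E` is an extension of the algebra `A` by a square zero ideal which is isomorphic, through `ι`,
to the regular bimodule `A`. -/
structure IsSquareZeroExtension {R A E : Type*} [CommRing R] [Ring A] [Algebra R A] [Ring E]
    [Algebra R E] (π : E →ₐ[R] A) (ι : A →ₗ[R] E) : Prop where
  surjective : Function.Surjective π
  injective : Function.Injective ι
  exact : Function.Exact ι π
  mul_ι : ∀ x m, x * ι m = ι (π x * m)
  ι_mul : ∀ m x, ι m * x = ι (m * π x)

namespace IsSquareZeroExtension

variable {R A E : Type*} [CommRing R] [Ring A] [Algebra R A] [Ring E] [Algebra R E]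
  {π : E →ₐ[R] A} {ι : A →ₗ[R] E}

lemma π_ι (S : IsSquareZeroExtension π ι) (m : A) : π (ι m) = 0 :=
  S.exact.apply_apply_eq_zero m

lemma ι_mul_ι (S : IsSquareZeroExtension π ι) (m n : A) : ι m * ι n = 0 := by
  rw [S.mul_ι, S.π_ι, zero_mul, map_zero]

lemma add_ι_mul_add_ι (S : IsSquareZeroExtension π ι) (x y : E) (m n : A) :
    (x + ι m) * (y + ι n) = x * y + ι (π x * n + m * π y) := by
  rw [add_mul, mul_add, mul_add, S.ι_mul_ι, S.mul_ι, S.ι_mul, map_add, add_zero, add_assoc]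

lemma exists_eq_ι (S : IsSquareZeroExtension π ι) {x : E} (hx : π x = 0) : ∃ m, x = ι m :=
  ((S.exact x).1 hx).imp fun _ h => h.symm

lemma mul_eq_zero_of_π_eq_zero (S : IsSquareZeroExtension π ι) {x y : E} (hx : π x = 0)
    (hy : π y = 0) : x * y = 0 := by
  obtain ⟨m, rfl⟩ := S.exists_eq_ι hx
  rw [S.ι_mul, hy, mul_zero, map_zero]

lemma exists_completeOrthogonalIdempotents (S : IsSquareZeroExtension π ι) {I : Type*} [Fintype I]
    {e : I → A} (he : CompleteOrthogonalIdempotents e) :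
    ∃ e' : I → E, CompleteOrthogonalIdempotents e' ∧ ∀ i, π (e' i) = e i := by
  obtain ⟨e', he', h⟩ := CompleteOrthogonalIdempotents.lift_of_isNilpotent_ker (π : E →+* A)
    (fun x hx => ⟨2, by rw [pow_two, S.mul_eq_zero_of_π_eq_zero hx hx]⟩) he
    (fun i => S.surjective (e i))
  exact ⟨e', he', congrFun h⟩

end IsSquareZeroExtension

/-- The square zero extension of `A` defined by a Hochschild `2`-cocycle `f`: the module `A × A`
with the product `(a, m) * (b, n) = (a * b, a * n + m * b + f a b)`. -/
def TwistedExtension {k A : Type*} [CommRing k] [Ring A] [Algebra k A]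
    (_ : hochschildCocycles k A) : Type _ := A × A

namespace TwistedExtension

variable {k A : Type*} [CommRing k] [Ring A] [Algebra k A] {f : hochschildCocycles k A}

instance : AddCommGroup (TwistedExtension f) := inferInstanceAs (AddCommGroup (A × A))

instance : Module k (TwistedExtension f) := inferInstanceAs (Module k (A × A))

/-- The projection of the twisted extension onto `A`. -/
def fst (x : TwistedExtension f) : A := Prod.fst x

/-- The component of an element of the twisted extension in the square zero ideal. -/
def snd (x : TwistedExtension f) : A := Prod.snd x

@[ext] lemma ext {x y : TwistedExtension f} (h₁ : x.fst = y.fst) (h₂ : x.snd = y.snd) : x = y :=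
  Prod.ext h₁ h₂

@[simp] lemma fst_zero : (0 : TwistedExtension f).fst = 0 := rfl
@[simp] lemma snd_zero : (0 : TwistedExtension f).snd = 0 := rfl
@[simp] lemma fst_add (x y : TwistedExtension f) : (x + y).fst = x.fst + y.fst := rfl
@[simp] lemma snd_add (x y : TwistedExtension f) : (x + y).snd = x.snd + y.snd := rfl
@[simp] lemma fst_smul (r : k) (x : TwistedExtension f) : (r • x).fst = r • x.fst := rfl
@[simp] lemma snd_smul (r : k) (x : TwistedExtension f) : (r • x).snd = r • x.snd := rfl

-- The cocycle identity at `(1, 1, a)` and `(a, 1, 1)` makes `(1, -f 1 1)` a unit, so `f` need not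
-- be normalized.
instance : One (TwistedExtension f) := ⟨((1 : A), -f.1 1 1)⟩

instance : Mul (TwistedExtension f) :=
  ⟨fun x y => (x.fst * y.fst, x.fst * y.snd + x.snd * y.fst + f.1 x.fst y.fst)⟩

@[simp] lemma fst_one : (1 : TwistedExtension f).fst = 1 := rfl
@[simp] lemma snd_one : (1 : TwistedExtension f).snd = -f.1 1 1 := rfl
@[simp] lemma fst_mul (x y : TwistedExtension f) : (x * y).fst = x.fst * y.fst := rfl
@[simp] lemma snd_mul (x y : TwistedExtension f) :
    (x * y).snd = x.fst * y.snd + x.snd * y.fst + f.1 x.fst y.fst := rfl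

instance : Ring (TwistedExtension f) where
  __ := (inferInstance : AddCommGroup (TwistedExtension f))
  left_distrib x y z := ext (mul_add _ _ _) (by
    simp only [snd_mul, fst_add, snd_add, mul_add, map_add]
    abel)
  right_distrib x y z := ext (add_mul _ _ _) (by
    simp only [snd_mul, fst_add, snd_add, add_mul, map_add, LinearMap.add_apply]
    abel)
  zero_mul x := ext (zero_mul _) (by simp)
  mul_zero x := ext (mul_zero _) (by simp)
  mul_assoc x y z := ext (mul_assoc _ _ _) (by
    have hf := f.2 x.fst y.fst z.fst
    simp only [snd_mul, fst_mul, mul_add, add_mul, mul_assoc]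
    rw [← sub_eq_zero] at hf ⊢
    rw [← neg_eq_zero, ← hf]
    abel)
  one_mul x := ext (one_mul _) (by
    have hf := f.2 1 1 x.fst
    simp only [one_mul, add_right_inj] at hf
    simp [hf])
  mul_one x := ext (mul_one _) (by
    have hf := f.2 x.fst 1 1
    simp only [mul_one, add_left_inj] at hf
    simp [hf])

instance : Algebra k (TwistedExtension f) :=
  Algebra.ofModule (fun r x y => ext (smul_mul_assoc _ _ _) (by simp [smul_add]))
    (fun r x y => ext (mul_smul_comm _ _ _) (by simp [smul_add]))

variable (f) in
/-- The projection of the twisted extension onto `A` as a homomorphism of algebras. -/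
def fstHom : TwistedExtension f →ₐ[k] A :=
  AlgHom.ofLinearMap (LinearMap.fst k A A) rfl fun _ _ => rfl

variable (f) in
/-- The inclusion of the square zero ideal into the twisted extension. -/
def inr : A →ₗ[k] TwistedExtension f := LinearMap.inr k A A

lemma isSquareZeroExtension : IsSquareZeroExtension (fstHom f) (inr f) where
  surjective := Prod.fst_surjective
  injective := LinearMap.inr_injective
  exact := Function.Exact.inr_fst
  mul_ι x m := ext (mul_zero _) (by
    change x.fst * m + x.snd * 0 + f.1 x.fst 0 = x.fst * m
    simp)
  ι_mul m x := ext (zero_mul _) (by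
    change 0 * x.snd + m * x.fst + f.1 0 x.fst = m * x.fst
    simp)

lemma mem_range_hochschildCoboundary_of_section {σ : A →ₐ[k] TwistedExtension f}
    (hσ : ∀ a, fstHom f (σ a) = a) :
    (f : A →ₗ[k] A →ₗ[k] A) ∈ LinearMap.range (hochschildCoboundary k A) := by
  refine ⟨-LinearMap.snd k A A ∘ₗ σ.toLinearMap, LinearMap.ext₂ fun a b => ?_⟩
  have hmul : (σ (a * b)).snd = a * (σ b).snd + (σ a).snd * b + f.1 a b := by
    rw [map_mul, snd_mul]
    exact congrArg₂ (fun x y => x * (σ b).snd + (σ a).snd * y + f.1 x y) (hσ a) (hσ b)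
  change a * -(σ b).snd - -(σ (a * b)).snd + -(σ a).snd * b = f.1 a b
  rw [hmul, neg_mul, mul_neg]
  abel

end TwistedExtension

end SquareZeroExtension

section Lifting

variable {K} {A E : Type*} [Ring A] [Algebra K A] [Ring E] [Algebra K E] {g : QGen → A}
  {G : QGen → E} {π : E →ₐ[K] A} {ι : A →ₗ[K] E}

lemma sum_isVertex {M : Type*} [AddCommMonoid M] (f : QGen → M) :
    ∑ v : {x // IsVertex x}, f v = f e1 + f e2 + f e3 + f e4 := by
  rw [← Finset.sum_subtype {e1, e2, e3, e4} (by decide) f]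
  simp [add_assoc]

lemma PathRelations.completeOrthogonalIdempotents (hg : PathRelations g) :
    CompleteOrthogonalIdempotents fun v : {x // IsVertex x} => g v where
  idem v := by
    rw [IsIdempotentElem, hg.vertex_mul _ _ v.2, if_pos (src_of_isVertex v.2).symm]
  ortho v w hvw := by
    refine (hg.vertex_mul _ _ v.2).trans ?_
    rw [src_of_isVertex w.2, if_neg (Subtype.coe_ne_coe.2 hvw)]
  complete := (sum_isVertex g).trans hg.sum_vertex

lemma pathRelations_of_completeOrthogonalIdempotents {e : {x // IsVertex x} → E}
    (he : CompleteOrthogonalIdempotents e) {s : QGen → E}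
    (hs : ∀ v : {x // IsVertex x}, s v = e v) :
    PathRelations fun x => e ⟨src x, isVertex_src x⟩ * s x * e ⟨tgt x, isVertex_tgt x⟩ := by
  have hvertex (v : {x // IsVertex x}) :
      e ⟨src v, isVertex_src v⟩ * s v * e ⟨tgt v, isVertex_tgt v⟩ = e v := by
    simp only [src_of_isVertex v.2, tgt_of_isVertex v.2, hs, he.mul_eq, if_true]
  refine ⟨fun v x hv => ?_, fun x v hv => ?_, ?_⟩
  · rw [hvertex ⟨v, hv⟩, ← mul_assoc, ← mul_assoc, he.mul_eq]
    simp only [Subtype.mk.injEq]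
    split_ifs with hvx
    · simp only [hvx]
    · simp only [zero_mul]
  · rw [hvertex ⟨v, hv⟩, mul_assoc, he.mul_eq]
    simp only [Subtype.mk.injEq, mul_ite, mul_zero, eq_comm]
  · rw [← he.complete, ← Finset.sum_congr rfl fun v _ => hvertex v]
    exact (sum_isVertex fun x =>
      e ⟨src x, isVertex_src x⟩ * s x * e ⟨tgt x, isVertex_tgt x⟩).symm

lemma IsSquareZeroExtension.exists_pathRelations (S : IsSquareZeroExtension π ι)
    (hg : PathRelations g) : ∃ G : QGen → E, PathRelations G ∧ ∀ x, π (G x) = g x := by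
  obtain ⟨e, he, hπe⟩ := S.exists_completeOrthogonalIdempotents hg.completeOrthogonalIdempotents
  have hlift (x : QGen) : ∃ y, π y = g x ∧ ∀ hx : IsVertex x, y = e ⟨x, hx⟩ := by
    by_cases hx : IsVertex x
    · exact ⟨e ⟨x, hx⟩, hπe _, fun _ => rfl⟩
    · exact (S.surjective (g x)).imp fun y hy => ⟨hy, fun h => absurd h hx⟩
  choose s hπs hs using hlift
  refine ⟨_, pathRelations_of_completeOrthogonalIdempotents he fun v => hs v v.2, fun x => ?_⟩
  rw [map_mul, map_mul, hπe, hπe, hπs, hg.src_mul, hg.mul_tgt]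

lemma IsSquareZeroExtension.pathRelations_add_ι (S : IsSquareZeroExtension π ι)
    (hG : PathRelations G) (hπ : ∀ x, π (G x) = g x) {u : QGen → A}
    (hvertex : ∀ v, IsVertex v → u v = 0) (hsrc : ∀ x, g (src x) * u x = u x)
    (htgt : ∀ x, u x * g (tgt x) = u x) : PathRelations fun x => G x + ι (u x) where
  vertex_mul v x hv := by
    have hu : g v * u x = if v = src x then u x else 0 := by
      rw [← hsrc x, ← mul_assoc, ← hπ, ← hπ, ← map_mul, hG.vertex_mul v _ hv,
        src_of_isVertex (isVertex_src x)]
      split_ifs <;> simp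
    rw [S.add_ι_mul_add_ι, hvertex v hv, zero_mul, add_zero, hG.vertex_mul v x hv, hπ, hu]
    split_ifs <;> simp
  mul_vertex x v hv := by
    have hu : u x * g v = if v = tgt x then u x else 0 := by
      rw [← htgt x, mul_assoc, ← hπ, ← hπ, ← map_mul, hG.mul_vertex _ v hv,
        tgt_of_isVertex (isVertex_tgt x)]
      split_ifs <;> simp
    rw [S.add_ι_mul_add_ι, hvertex v hv, mul_zero, zero_add, hG.mul_vertex x v hv, hπ, hu]
    split_ifs <;> simp
  sum_vertex := by
    simpa only [hvertex _ (show IsVertex e1 by decide), hvertex _ (show IsVertex e2 by decide),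
      hvertex _ (show IsVertex e3 by decide), hvertex _ (show IsVertex e4 by decide), map_zero,
      add_zero] using hG.sum_vertex

lemma IsSquareZeroExtension.exists_eq_ι_vertex_mul (S : IsSquareZeroExtension π ι)
    (hπ : ∀ x, π (G x) = g x) {v : QGen} {x : E} (hx : π x = 0) (hv : G v * x * G v = x) :
    ∃ m, x = ι (g v * m * g v) := by
  obtain ⟨m, rfl⟩ := S.exists_eq_ι hx
  exact ⟨m, by rw [← hv, S.mul_ι, S.ι_mul, hπ]⟩

end Lifting

section Corners

/-- The normal words which start and end at the vertex `v`. -/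
def closedNormalWords (v : QGen) : Finset (List QGen) :=
  normalWords.toFinset.filter fun w => src (w.headD v) = v ∧ tgt (w.getLastD v) = v

set_option maxRecDepth 100000 in
lemma mem_closedNormalWords_of_mem_wordMul {κ : Bool} {v : QGen} (hv : IsVertex v)
    {w u : List QGen} (hw : w ∈ normalWords) (hu : u ∈ wordMul κ (v :: w) [[v]]) :
    u ∈ closedNormalWords v := by
  have h : ∀ κ v, IsVertex v → ∀ w ∈ normalWords, ∀ u ∈ wordMul κ (v :: w) [[v]],
    u ∈ closedNormalWords v := by decide +kernel
  exact h κ v hv w hw u hu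

variable {K} {A : Type} [Ring A] [Algebra K A] {κ : Bool} {g : QGen → A}

/-- The element of `e4 A e4` with the given coefficients at the four normal words which are loops
at the vertex `4`. -/
def loopCombination (g : QGen → A) (x p q z : K) : A :=
  x • g e4 + p • (g δ * g γ) + q • (g ε * g ξ) + z • (g ε * (g ξ * (g δ * g γ)))

lemma loopCombination_add (x p q z x' p' q' z' : K) :
    loopCombination g x p q z + loopCombination g x' p' q' z' =
      loopCombination g (x + x') (p + p') (q + q') (z + z') := by
  simp only [loopCombination, add_smul]
  abel

namespace Relations

lemma εξ_mul_loopCombination (hg : Relations κ g) (x p q z : K) :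
    g ε * g ξ * loopCombination g x p q z = loopCombination g 0 0 x p := by
  have hξe4 : g ξ * g e4 = g ξ := hg.mul_tgt ξ
  simp only [loopCombination, mul_add, mul_smul_comm, mul_assoc, hξe4, hg.ξ_mul_ε_mul, mul_zero,
    smul_zero, zero_smul, add_zero, zero_add]

lemma ξ_mul_loopCombination_mul_ε (hg : Relations κ g) (x p q z : K) :
    g ξ * loopCombination g x p q z * g ε = p • (g ξ * (g δ * (g γ * g ε))) := by
  have he4ε : g e4 * g ε = g ε := hg.src_mul ε
  simp only [loopCombination, mul_add, add_mul, mul_smul_comm, smul_mul_assoc, mul_assoc, he4ε,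
    hg.ξ_mul_ε, hg.ξ_mul_ε_mul, smul_zero, add_zero, zero_add]

lemma γ_mul_loopCombination_mul_δ (hg : Relations κ g) (x p q z : K) :
    g γ * loopCombination g x p q z * g δ = q • (g γ * (g ε * (g ξ * g δ))) := by
  have he4δ : g e4 * g δ = g δ := hg.src_mul δ
  simp only [loopCombination, mul_add, add_mul, mul_smul_comm, smul_mul_assoc, mul_assoc, he4δ,
    hg.γ_mul_δ, hg.γ_mul_δ_mul, mul_zero, smul_zero, add_zero, zero_add]

lemma loopCombination_mul_δγ (hg : Relations κ g) (x p q z : K) :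
    loopCombination g x p q z * (g δ * g γ) = loopCombination g 0 x 0 q := by
  have he4δ : g e4 * (g δ * g γ) = g δ * g γ :=
    hg.src_mul_mul δ _
  simp only [loopCombination, add_mul, smul_mul_assoc, mul_assoc, he4δ, hg.γ_mul_δ_mul, mul_zero,
    smul_zero, zero_smul, add_zero, zero_add]

variable [CharP A 2]

lemma δγ_mul_loopCombination (hg : Relations κ g) (x p q z : K) :
    g δ * g γ * loopCombination g x p q z = loopCombination g 0 x 0 q := by
  have hγe4 : g γ * g e4 = g γ := hg.mul_tgt γ
  have hδγεξ : g δ * (g γ * (g ε * g ξ)) = g ε * (g ξ * (g δ * g γ)) := by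
    simpa using hg.δ_mul_γ_mul_ε_mul_ξ_mul 1
  simp only [loopCombination, mul_add, mul_smul_comm, mul_assoc, hγe4, hδγεξ, hg.γ_mul_δ_mul,
    hg.δ_mul_γ_mul_ε_mul_ξ_mul, mul_zero, smul_zero, zero_smul, add_zero, zero_add]

lemma loopCombination_mul_εξ (hg : Relations κ g) (x p q z : K) :
    loopCombination g x p q z * (g ε * g ξ) = loopCombination g 0 0 x p := by
  have he4ε : g e4 * (g ε * g ξ) = g ε * g ξ :=
    hg.src_mul_mul ε _
  have hδγεξ : g δ * (g γ * (g ε * g ξ)) = g ε * (g ξ * (g δ * g γ)) := by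
    simpa using hg.δ_mul_γ_mul_ε_mul_ξ_mul 1
  simp only [loopCombination, add_mul, smul_mul_assoc, mul_assoc, he4ε, hδγεξ, hg.ξ_mul_ε_mul,
    mul_zero, smul_zero, zero_smul, add_zero, zero_add]

end Relations

namespace IsPresentation

variable [CharP K 2]

lemma vertex_mul_mul_vertex_mem_span (h : IsPresentation K κ g) {v : QGen} (hv : IsVertex v)
    (m : A) : g v * m * g v ∈ Submodule.span K (wordProd g '' closedNormalWords v) := by
  have := h.charP
  have hm : m ∈ Submodule.span K (Set.range fun w : NormalWord => wordProd g w.1) :=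
    h.span_range_eq_top ▸ Submodule.mem_top
  induction hm using Submodule.span_induction with
  | zero => simp
  | add a b _ _ ha hb => simpa only [mul_add, add_mul] using Submodule.add_mem _ ha hb
  | smul r a _ ha =>
    simpa only [mul_smul_comm, smul_mul_assoc] using Submodule.smul_mem _ r ha
  | mem a ha =>
    obtain ⟨w, rfl⟩ := ha
    have hprod := h.wordProd_mul_wordProd (v :: w.1) (singleton_mem_normalWords v)
    rw [wordProd_cons, wordProd_cons, wordProd_nil, mul_one] at hprod
    rw [hprod, wordSum]
    refine list_sum_mem fun a ha => ?_
    obtain ⟨u, hu, rfl⟩ := List.mem_map.1 ha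
    exact Submodule.subset_span ⟨u, mem_closedNormalWords_of_mem_wordMul hv w.2 hu, rfl⟩

lemma exists_vertex_mul_mul_vertex_eq_sum (h : IsPresentation K κ g) {v : QGen}
    (hv : IsVertex v) (m : A) :
    ∃ c : List QGen → K, g v * m * g v = ∑ w ∈ closedNormalWords v, c w • wordProd g w := by
  obtain ⟨c, hc⟩ := (Submodule.mem_span_image_finset_iff_exists_fun K).1
    (h.vertex_mul_mul_vertex_mem_span hv m)
  refine ⟨fun w => if hw : w ∈ closedNormalWords v then c ⟨w, hw⟩ else 0, ?_⟩
  rw [← Finset.sum_coe_sort, ← hc]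
  simp

lemma exists_e1_mul_mul_e1_eq (h : IsPresentation K κ g) (m : A) :
    ∃ x z : K, g e1 * m * g e1 = x • g e1 + z • (g α * (g ε * (g ξ * g β))) := by
  obtain ⟨c, hc⟩ := h.exists_vertex_mul_mul_vertex_eq_sum (v := e1) (by decide) m
  rw [show closedNormalWords e1 = {[e1], [α, ε, ξ, β]} by decide] at hc
  exact ⟨_, _, by simpa using hc⟩

lemma exists_e2_mul_mul_e2_eq (h : IsPresentation K κ g) (m : A) :
    ∃ x z : K, g e2 * m * g e2 = x • g e2 + z • (g ξ * (g δ * (g γ * g ε))) := by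
  obtain ⟨c, hc⟩ := h.exists_vertex_mul_mul_vertex_eq_sum (v := e2) (by decide) m
  rw [show closedNormalWords e2 = {[e2], [ξ, δ, γ, ε]} by decide] at hc
  exact ⟨_, _, by simpa using hc⟩

lemma exists_e3_mul_mul_e3_eq (h : IsPresentation K κ g) (m : A) :
    ∃ x z : K, g e3 * m * g e3 = x • g e3 + z • (g γ * (g ε * (g ξ * g δ))) := by
  obtain ⟨c, hc⟩ := h.exists_vertex_mul_mul_vertex_eq_sum (v := e3) (by decide) m
  rw [show closedNormalWords e3 = {[e3], [γ, ε, ξ, δ]} by decide] at hc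
  exact ⟨_, _, by simpa using hc⟩

lemma exists_e4_mul_mul_e4_eq (h : IsPresentation K κ g) (m : A) :
    ∃ x p q z : K, g e4 * m * g e4 = loopCombination g x p q z := by
  obtain ⟨c, hc⟩ := h.exists_vertex_mul_mul_vertex_eq_sum (v := e4) (by decide) m
  rw [show closedNormalWords e4 = {[e4], [δ, γ], [ε, ξ], [ε, ξ, δ, γ]} by decide] at hc
  exact ⟨_, _, _, _, by simpa [loopCombination, add_assoc] using hc⟩

lemma loopCombination_eq_zero (h : IsPresentation K κ g) {x p q z : K}
    (hL : loopCombination g x p q z = 0) : x = 0 ∧ p = 0 ∧ q = 0 ∧ z = 0 := by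
  let W : Fin 4 → NormalWord := ![⟨[e4], by decide⟩, ⟨[δ, γ], by decide⟩, ⟨[ε, ξ], by decide⟩,
    ⟨[ε, ξ, δ, γ], by decide⟩]
  have hW := Fintype.linearIndependent_iff.1
    (h.linearIndependent.comp W (by decide)) ![x, p, q, z] (by
      simpa [Fin.sum_univ_four, W, loopCombination] using hL)
  exact ⟨hW 0, hW 1, hW 2, hW 3⟩

lemma loopCombination_inj (h : IsPresentation K κ g) {x p q z x' p' q' z' : K}
    (hL : loopCombination g x p q z = loopCombination g x' p' q' z') :
    x = x' ∧ p = p' ∧ q = q' ∧ z = z' := by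
  have hsub := h.loopCombination_eq_zero (x := x - x') (p := p - p') (q := q - q') (z := z - z') (by
    rw [← sub_eq_zero.2 hL]
    simp only [loopCombination, sub_smul]
    abel)
  simpa only [sub_eq_zero] using hsub

lemma wordProd_ne_zero (h : IsPresentation K κ g) {w : List QGen} (hw : w ∈ normalWords) :
    wordProd g w ≠ 0 :=
  h.linearIndependent.ne_zero (⟨w, hw⟩ : NormalWord)

end IsPresentation

end Corners

section Nilpotency

variable {R : Type*} [Ring R]

lemma mul_mul_eq_zero_of_isNilpotent {a b : R} (hb : b * b = 0) (hadd : a * a = a * b + b * a)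
    (haba : a * a = a * b * a) (ha : IsNilpotent a) : b * a * b = 0 := by
  have hbaba : b * a * b * a = b * a * b := by
    calc b * a * b * a = b * (a * b * a) := by simp only [mul_assoc]
      _ = b * (a * b) + b * b * a := by rw [← haba, hadd, mul_add, mul_assoc b b]
      _ = b * a * b := by rw [hb, zero_mul, add_zero, mul_assoc]
  have hpow (n : ℕ) : b * a * b * a ^ n = b * a * b := by
    induction n with
    | zero => rw [pow_zero, mul_one]
    | succ n ih => rw [pow_succ, ← mul_assoc, ih, hbaba]
  obtain ⟨n, hn⟩ := ha
  rw [← hpow n, hn, mul_zero]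

variable [CharP R 2]

lemma mul_comm_of_mul_mul_eq_zero {a b : R} (hb : b * b = 0) (hadd : a * a = a * b + b * a)
    (haba : a * a = a * b * a) (hbab : b * a * b = 0) : a * b = b * a := by
  have haab : a * a * b = 0 := by
    rw [hadd, add_mul, mul_assoc a b b, hb, mul_zero, zero_add, hbab]
  have haaa : a * a * a = 0 := by
    rw [mul_assoc, haba, ← mul_assoc, ← mul_assoc, haab, zero_mul]
  have hba : b * a = a * a + a * b := by
    rw [hadd, add_right_comm, CharTwo.add_self_eq_zero, zero_add]
  have haa : a * a = 0 := by
    rw [haba, mul_assoc, hba, mul_add, ← mul_assoc, ← mul_assoc, haaa, haab, add_zero]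
  rw [hba, haa, zero_add]

lemma Relations.of_isNilpotent {G : QGen → R} (hG : PathRelations G)
    (hαβ : G α * G β = G α * G δ * G γ * G β) (hξε : G ξ * G ε = 0) (hγδ : G γ * G δ = 0)
    (hmesh : G β * G α + G δ * G γ + G ε * G ξ = 0) (hnil : IsNilpotent (G β * G α)) :
    Relations true G := by
  set a := G β * G α with ha
  set b := G δ * G γ with hb
  have hbb : b * b = 0 := by
    rw [hb, mul_assoc, ← mul_assoc (G γ), hγδ, zero_mul, mul_zero]
  have hadd : a * a = a * b + b * a := by
    have hsq : (a + b) * (a + b) = 0 := by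
      rw [CharTwo.add_eq_zero.1 hmesh, mul_assoc, ← mul_assoc (G ξ), hξε, zero_mul, mul_zero]
    rw [← CharTwo.add_eq_zero, ← hsq, mul_add, add_mul, add_mul, hbb]
    abel
  have hαβ' : G α * G β = G α * b * G β := by rw [hαβ, hb, ← mul_assoc]
  have haba : a * a = a * b * a := by
    calc a * a = G β * (G α * G β) * G α := by simp only [ha, mul_assoc]
      _ = a * b * a := by simp only [hαβ', ha, mul_assoc]
  have hbab := mul_mul_eq_zero_of_isNilpotent hbb hadd haba hnil
  have hab := mul_comm_of_mul_mul_eq_zero hbb hadd haba hbab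
  refine ⟨hG, by simpa using hαβ, hξε, hγδ, hmesh, ?_, ?_⟩
  · calc G α * G β * G α = G α * (b * a) := by simp only [hαβ', ha, mul_assoc]
      _ = G α * G β * G α * b := by rw [← hab, ha]; simp only [mul_assoc]
      _ = G α * (b * a * b) := by simp only [hαβ', ha, mul_assoc]
      _ = 0 := by rw [hbab, mul_zero]
  · calc G β * G α * G β = a * b * G β := by rw [mul_assoc, hαβ', ha]; simp only [mul_assoc]
      _ = b * G β * (G α * G β) := by rw [hab, ha]; simp only [mul_assoc]
      _ = b * a * b * G β := by rw [hαβ', ha]; simp only [mul_assoc]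
      _ = 0 := by rw [hbab, zero_mul]

end Nilpotency

section Obstruction

namespace IsSquareZeroExtension

variable {R A E : Type*} [CommRing R] [Ring A] [Algebra R A] [Ring E] [Algebra R E] [CharP E 2]
  {π : E →ₐ[R] A} {ι : A →ₗ[R] E} {b c : E} {s r N : A}

lemma add_add_ι_mul_self (S : IsSquareZeroExtension π ι) (hb : b * b = 0) (hc : c * c = ι s)
    (hN : b * c + c * b = ι N) (hr : π (b + c) * r = r * π (b + c)) :
    (b + c + ι r) * (b + c + ι r) = ι (s + N) := by
  have hdouble : ι (r * π (b + c) + r * π (b + c)) = 0 := by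
    rw [map_add, CharTwo.add_self_eq_zero]
  calc (b + c + ι r) * (b + c + ι r) = (b + c) * (b + c) := by
        rw [S.add_ι_mul_add_ι, hr, hdouble, add_zero]
    _ = b * b + c * c + (b * c + c * b) := by rw [mul_add, add_mul, add_mul]; abel
    _ = ι (s + N) := by rw [hb, hc, hN, zero_add, ← map_add]

lemma add_add_ι_mul_add_mul (S : IsSquareZeroExtension π ι)
    (hN : b * c + c * b = ι N) (hr : π b * r = r * π b) :
    (b + c + ι r) * b + b * (b + c + ι r) = ι N := by
  calc (b + c + ι r) * b + b * (b + c + ι r)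
      = b * b + b * b + (b * c + c * b) + (ι (r * π b) + ι (r * π b)) := by
        rw [mul_add, mul_add, add_mul, add_mul, S.mul_ι, S.ι_mul, hr]; abel
    _ = ι N := by rw [CharTwo.add_self_eq_zero, CharTwo.add_self_eq_zero, hN, zero_add, add_zero]

lemma mul_add_mul_mul_eq_zero (S : IsSquareZeroExtension π ι) {x y : E} {m : A} (hm : x * y = ι m)
    (hcomm : π (x * b * y) * m = m * π (x * b * y)) : x * (b * (y * x) + y * x * b) * y = 0 := by
  calc x * (b * (y * x) + y * x * b) * y = x * b * y * (x * y) + x * y * (x * b * y) := by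
        simp only [mul_add, add_mul, mul_assoc]
    _ = 0 := by rw [hm, S.mul_ι, S.ι_mul, hcomm, CharTwo.add_self_eq_zero]

lemma mul_mul_self_eq_ι (S : IsSquareZeroExtension π ι) {a : E} (ha : a * a = ι s)
    (hN : a * b + b * a = ι N) : a * b * a = ι (s * π b + π a * N) := by
  have hba : b * a = a * b + ι N := by rw [← hN, CharTwo.add_cancel_left]
  rw [mul_assoc, hba, mul_add, ← mul_assoc, ha, S.ι_mul, S.mul_ι, map_add]

end IsSquareZeroExtension

variable {K}

/-- The defects of a lift `G` of the generators `g` of `A₂` to a square zero extension with ideal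
`ι A`: the relations of `A₂` take values in the ideal at `G`, and closed paths being combinations
of closed normal words, the values are given by coefficients. Only lifts for which the coefficients
at `e3` and `e4` in the last two defects vanish are considered. -/
structure LiftDefects {A E : Type} [Ring A] [Algebra K A] [Ring E] [Algebra K E] (ι : A →ₗ[K] E)
    (g : QGen → A) (G : QGen → E) where
  (x₁ z₁ x₂ z₂ z₃ p q z₄ : K)
  α_mul_β : G α * G β + G α * G δ * G γ * G β =
    ι (x₁ • g e1 + z₁ • (g α * (g ε * (g ξ * g β))))
  ξ_mul_ε : G ξ * G ε = ι (x₂ • g e2 + z₂ • (g ξ * (g δ * (g γ * g ε))))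
  γ_mul_δ : G γ * G δ = ι (z₃ • (g γ * (g ε * (g ξ * g δ))))
  mesh : G β * G α + G δ * G γ + G ε * G ξ = ι (loopCombination g 0 p q z₄)

namespace LiftDefects

variable {A E : Type} [Ring A] [Algebra K A] [Ring E] [Algebra K E] {π : E →ₐ[K] A}
  {ι : A →ₗ[K] E} {κ : Bool} {g : QGen → A} {G : QGen → E}

lemma exists_commutator_eq [CharP K 2] (h : IsPresentation K κ g) (S : IsSquareZeroExtension π ι)
    (hG : PathRelations G) (hπ : ∀ x, π (G x) = g x) :
    ∃ n₀ n₁ n₂ n₃ : K, G δ * G γ * (G ε * G ξ) + G ε * G ξ * (G δ * G γ) =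
      ι (loopCombination g n₀ n₁ n₂ n₃) := by
  have := h.charP
  have hδγεξ : g δ * (g γ * (g ε * g ξ)) = g ε * (g ξ * (g δ * g γ)) := by
    simpa using h.δ_mul_γ_mul_ε_mul_ξ_mul 1
  have he4δ (y : E) : G e4 * (G δ * y) = G δ * y := hG.src_mul_mul δ y
  have he4ε (y : E) : G e4 * (G ε * y) = G ε * y := hG.src_mul_mul ε y
  have hγe4 : G γ * G e4 = G γ := hG.mul_tgt γ
  have hξe4 : G ξ * G e4 = G ξ := hG.mul_tgt ξ
  obtain ⟨m, hm⟩ := S.exists_eq_ι_vertex_mul hπ (v := e4)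
    (x := G δ * G γ * (G ε * G ξ) + G ε * G ξ * (G δ * G γ))
    (by simp only [map_add, map_mul, hπ, mul_assoc, hδγεξ, CharTwo.add_self_eq_zero])
    (by simp only [mul_add, add_mul, mul_assoc, he4δ, he4ε, hγe4, hξe4])
  obtain ⟨n₀, n₁, n₂, n₃, hn⟩ := h.exists_e4_mul_mul_e4_eq m
  exact ⟨n₀, n₁, n₂, n₃, hm.trans (congrArg ι hn)⟩

lemma commutator_coeff_δγ_eq_zero [CharP K 2] [CharP E 2] (D : LiftDefects ι g G)
    (h : IsPresentation K κ g) (S : IsSquareZeroExtension π ι) (hπ : ∀ x, π (G x) = g x)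
    {n₀ n₁ n₂ n₃ : K} (hN : G δ * G γ * (G ε * G ξ) + G ε * G ξ * (G δ * G γ) =
      ι (loopCombination g n₀ n₁ n₂ n₃)) : n₁ = 0 := by
  have he2ξ (y : A) : g e2 * (g ξ * y) = g ξ * y := h.src_mul_mul ξ y
  have hεe2 : g ε * g e2 = g ε := h.mul_tgt ε
  have hzero := S.mul_add_mul_mul_eq_zero (b := G δ * G γ) D.ξ_mul_ε (by
    simp only [map_mul, hπ, mul_add, add_mul, mul_smul_comm, smul_mul_assoc, mul_assoc, he2ξ, hεe2])
  rw [hN, S.mul_ι, S.ι_mul, hπ, hπ, h.ξ_mul_loopCombination_mul_ε] at hzero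
  have hξδγε : g ξ * (g δ * (g γ * g ε)) ≠ 0 := by
    simpa using h.wordProd_ne_zero (w := [ξ, δ, γ, ε]) (by decide)
  exact (smul_eq_zero.1 (S.injective (hzero.trans (map_zero ι).symm))).resolve_right hξδγε

lemma commutator_coeff_εξ_eq_zero [CharP K 2] [CharP E 2] (D : LiftDefects ι g G)
    (h : IsPresentation K κ g) (S : IsSquareZeroExtension π ι) (hπ : ∀ x, π (G x) = g x)
    {n₀ n₁ n₂ n₃ : K} (hN : G δ * G γ * (G ε * G ξ) + G ε * G ξ * (G δ * G γ) =
      ι (loopCombination g n₀ n₁ n₂ n₃)) : n₂ = 0 := by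
  have hzero := S.mul_add_mul_mul_eq_zero (b := G ε * G ξ) D.γ_mul_δ (by
    simp only [map_mul, hπ, mul_smul_comm, smul_mul_assoc, mul_assoc])
  rw [add_comm, hN, S.mul_ι, S.ι_mul, hπ, hπ, h.γ_mul_loopCombination_mul_δ] at hzero
  have hγεξδ : g γ * (g ε * (g ξ * g δ)) ≠ 0 := by
    simpa using h.wordProd_ne_zero (w := [γ, ε, ξ, δ]) (by decide)
  exact (smul_eq_zero.1 (S.injective (hzero.trans (map_zero ι).symm))).resolve_right hγεξδ

lemma β_mul_α [CharP E 2] (D : LiftDefects ι g G) :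
    G β * G α = G δ * G γ + G ε * G ξ + ι (loopCombination g 0 D.p D.q D.z₄) := by
  rw [← D.mesh, add_assoc (G β * G α), add_comm (G β * G α), CharTwo.add_cancel_left]

section CharTwo

variable [CharP A 2]

lemma δγ_mul_δγ (D : LiftDefects ι g G) (S : IsSquareZeroExtension π ι) (hg : Relations κ g)
    (hπ : ∀ x, π (G x) = g x) : G δ * G γ * (G δ * G γ) = 0 := by
  have hγεξδγ : g γ * (g ε * (g ξ * (g δ * g γ))) = 0 := by
    simpa using hg.γ_mul_ε_mul_ξ_mul_δ_mul_γ_mul 1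
  calc G δ * G γ * (G δ * G γ) = G δ * (G γ * G δ * G γ) := by simp only [mul_assoc]
    _ = 0 := by
      rw [D.γ_mul_δ, S.ι_mul, hπ]
      simp only [smul_mul_assoc, mul_assoc, hγεξδγ, smul_zero, map_zero, mul_zero]

lemma εξ_mul_εξ (D : LiftDefects ι g G) (S : IsSquareZeroExtension π ι) (hg : Relations κ g)
    (hπ : ∀ x, π (G x) = g x) :
    G ε * G ξ * (G ε * G ξ) = ι (loopCombination g 0 0 D.x₂ 0) := by
  have he2ξ : g e2 * g ξ = g ξ := hg.src_mul ξ
  have hεξδγεξ := hg.ε_mul_ξ_mul_δ_mul_γ_mul_ε_mul (g ξ)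
  calc G ε * G ξ * (G ε * G ξ) = G ε * (G ξ * G ε * G ξ) := by simp only [mul_assoc]
    _ = ι (loopCombination g 0 0 D.x₂ 0) := by
      rw [D.ξ_mul_ε, S.ι_mul, S.mul_ι, hπ, hπ]
      simp only [loopCombination, add_mul, mul_add, smul_mul_assoc, mul_smul_comm, mul_assoc,
        he2ξ, hεξδγεξ, smul_zero, zero_smul, add_zero, zero_add]

lemma βα_mul_βα [CharP E 2] (D : LiftDefects ι g G) (S : IsSquareZeroExtension π ι)
    (hg : Relations true g) (hπ : ∀ x, π (G x) = g x) :
    G β * G α * (G β * G α) =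
      G β * G α * (G δ * G γ) * (G β * G α) + ι (loopCombination g 0 D.x₁ D.x₁ 0) := by
  have he1α : g e1 * g α = g α := hg.src_mul α
  have hβα : g β * g α = g δ * g γ + g ε * g ξ := by simpa using hg.β_mul_α_mul 1
  have hαεξδγ := hg.α_mul_ε_mul_ξ_mul_δ_mul (g γ)
  have hαβ : G α * G β = G α * G δ * G γ * G β +
      ι (D.x₁ • g e1 + D.z₁ • (g α * (g ε * (g ξ * g β)))) := by
    rw [← D.α_mul_β, add_comm (G α * G β), CharTwo.add_cancel_left]
  calc G β * G α * (G β * G α) = G β * (G α * G β) * G α := by simp only [mul_assoc]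
    _ = G β * G α * (G δ * G γ) * (G β * G α) +
        G β * ι (D.x₁ • g e1 + D.z₁ • (g α * (g ε * (g ξ * g β)))) * G α := by
      rw [hαβ]
      simp only [mul_add, add_mul, mul_assoc]
    _ = _ := by
      rw [S.mul_ι, S.ι_mul, hπ, hπ]
      simp only [loopCombination, add_mul, mul_add, smul_mul_assoc, mul_smul_comm, mul_assoc,
        he1α, hβα, hαεξδγ, hg.ξ_mul_ε_mul, mul_zero, smul_add, smul_zero, zero_smul, add_zero,
        zero_add]

end CharTwo

/- With `a`, `b`, `c` the lifts of `βα`, `δγ`, `εξ`, the square of `a` is computed twice: from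
`a = b + c` and from `a² = aba`, both up to known elements of the ideal. -/
lemma coeff_eq_of_commutator_eq [CharP K 2] [CharP E 2] (D : LiftDefects ι g G)
    (h : IsPresentation K true g) (S : IsSquareZeroExtension π ι) (hπ : ∀ x, π (G x) = g x)
    {n₀ n₁ n₂ n₃ : K} (hN : G δ * G γ * (G ε * G ξ) + G ε * G ξ * (G δ * G γ) =
      ι (loopCombination g n₀ n₁ n₂ n₃)) : n₁ = D.x₁ ∧ D.x₂ + n₂ = D.x₁ := by
  have := h.charP
  have hβα : g β * g α = g δ * g γ + g ε * g ξ := by simpa using h.β_mul_α_mul 1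
  have hcomm : π (G δ * G γ) * loopCombination g 0 D.p D.q D.z₄ =
      loopCombination g 0 D.p D.q D.z₄ * π (G δ * G γ) := by
    rw [map_mul, hπ, hπ, h.δγ_mul_loopCombination, h.loopCombination_mul_δγ]
  have hcomm' : π (G δ * G γ + G ε * G ξ) * loopCombination g 0 D.p D.q D.z₄ =
      loopCombination g 0 D.p D.q D.z₄ * π (G δ * G γ + G ε * G ξ) := by
    rw [map_add, add_mul, mul_add, hcomm, map_mul, map_mul, hπ, hπ, hπ, hπ,
      h.εξ_mul_loopCombination, h.loopCombination_mul_εξ]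
  have hsq := S.add_add_ι_mul_self (D.δγ_mul_δγ S h.toRelations hπ)
    (D.εξ_mul_εξ S h.toRelations hπ) hN hcomm'
  have hanti := S.add_add_ι_mul_add_mul hN hcomm
  rw [← D.β_mul_α] at hsq hanti
  have haba := S.mul_mul_self_eq_ι hsq hanti
  have hsq' := D.βα_mul_βα S h.toRelations hπ
  rw [hsq, haba, ← map_add] at hsq'
  have hL := S.injective hsq'
  simp only [map_mul, hπ, hβα, add_mul, loopCombination_add, h.loopCombination_mul_δγ,
    h.δγ_mul_loopCombination, h.εξ_mul_loopCombination] at hL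
  obtain ⟨h₀, h₁, h₂, -⟩ := h.loopCombination_inj hL
  grind

lemma x₁_eq_zero_and_x₂_eq_zero [CharP K 2] [CharP E 2] (D : LiftDefects ι g G)
    (h : IsPresentation K true g) (S : IsSquareZeroExtension π ι) (hG : PathRelations G)
    (hπ : ∀ x, π (G x) = g x) : D.x₁ = 0 ∧ D.x₂ = 0 := by
  obtain ⟨n₀, n₁, n₂, n₃, hN⟩ := exists_commutator_eq h S hG hπ
  obtain ⟨hx₁, hx₂⟩ := D.coeff_eq_of_commutator_eq h S hπ hN
  have hn₁ := D.commutator_coeff_δγ_eq_zero h S hπ hN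
  have hn₂ := D.commutator_coeff_εξ_eq_zero h S hπ hN
  rw [hn₁] at hx₁
  rw [hn₂, add_zero, ← hx₁] at hx₂
  exact ⟨hx₁.symm, hx₂⟩

end LiftDefects

end Obstruction

section Correction

variable {K} {A E : Type} [Ring A] [Algebra K A] [Ring E] [Algebra K E]
  {π : E →ₐ[K] A} {ι : A →ₗ[K] E} {κ : Bool} {g : QGen → A} {G : QGen → E}

namespace IsPresentation

lemma exists_section (h : IsPresentation K true g) [CharP E 2] (S : IsSquareZeroExtension π ι)
    (hπ : ∀ x, π (G x) = g x) (hG : PathRelations G)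
    (hαβ : G α * G β = G α * G δ * G γ * G β) (hξε : G ξ * G ε = 0) (hγδ : G γ * G δ = 0)
    (hmesh : G β * G α + G δ * G γ + G ε * G ξ = 0) : ∃ σ : A →ₐ[K] E, ∀ a, π (σ a) = a := by
  have hβαβα : π (G β * G α * (G β * G α)) = 0 := by
    rw [map_mul, map_mul, hπ, hπ, ← mul_assoc, h.β_mul_α_mul_β, zero_mul]
  have hnil : IsNilpotent (G β * G α) :=
    ⟨4, by rw [show 4 = 2 + 2 from rfl, pow_add, pow_two,
      S.mul_eq_zero_of_π_eq_zero hβαβα hβαβα]⟩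
  obtain ⟨σ, hσ⟩ := h.exists_lift (Relations.of_isNilpotent hG hαβ hξε hγδ hmesh hnil)
  have hid : π.comp σ = AlgHom.id K A := AlgHom.ext_of_adjoin_eq_top h.adjoin_eq_top (by
    rintro _ ⟨x, rfl⟩
    rw [AlgHom.comp_apply, hσ, hπ, AlgHom.id_apply])
  exact ⟨σ, AlgHom.congr_fun hid⟩

end IsPresentation

lemma IsSquareZeroExtension.α_mul_β_add_ι (S : IsSquareZeroExtension π ι)
    (hπ : ∀ x, π (G x) = g x) (c : QGen → A) :
    (G α + ι (c α)) * (G β + ι (c β)) +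
        (G α + ι (c α)) * (G δ + ι (c δ)) * (G γ + ι (c γ)) * (G β + ι (c β)) =
      G α * G β + G α * G δ * G γ * G β +
        ι (g α * c β + c α * g β + (g α * g δ * g γ * c β +
          (g α * g δ * c γ + (g α * c δ + c α * g δ) * g γ) * g β)) := by
  simp only [S.add_ι_mul_add_ι, map_mul, hπ]
  rw [add_add_add_comm, ← map_add]

lemma IsSquareZeroExtension.mesh_add_ι (S : IsSquareZeroExtension π ι)
    (hπ : ∀ x, π (G x) = g x) (c : QGen → A) :
    (G β + ι (c β)) * (G α + ι (c α)) + (G δ + ι (c δ)) * (G γ + ι (c γ)) +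
        (G ε + ι (c ε)) * (G ξ + ι (c ξ)) =
      G β * G α + G δ * G γ + G ε * G ξ +
        ι (g β * c α + c β * g α + (g δ * c γ + c δ * g γ) + (g ε * c ξ + c ε * g ξ)) := by
  simp only [S.add_ι_mul_add_ι, hπ, map_add]
  abel

/-- The modification, by elements of the ideal, of a lift of the generators `g`: for each of the
arrows `α`, `γ` and `ε`, a combination of the arrow and of a parallel path of length `3`. -/
def arrowCorrection (g : QGen → A) (u u' v v' w w' : K) : QGen → A
  | α => u • g α + u' • (g α * (g ε * g ξ))
  | γ => v • g γ + v' • (g γ * (g ε * g ξ))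
  | ε => w • g ε + w' • (g δ * (g γ * g ε))
  | _ => 0

lemma src_mul_arrowCorrection (hg : PathRelations g) (u u' v v' w w' : K) (x : QGen) :
    g (src x) * arrowCorrection g u u' v v' w w' x = arrowCorrection g u u' v v' w w' x := by
  have he1α : g e1 * g α = g α := hg.src_mul α
  have he3γ : g e3 * g γ = g γ := hg.src_mul γ
  have he4ε : g e4 * g ε = g ε := hg.src_mul ε
  have he4δ : g e4 * g δ = g δ := hg.src_mul δ
  cases x <;>
    simp only [src, arrowCorrection, mul_add, mul_smul_comm, ← mul_assoc, he1α, he3γ, he4ε, he4δ,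
      mul_zero]

lemma arrowCorrection_mul_tgt (hg : PathRelations g) (u u' v v' w w' : K) (x : QGen) :
    arrowCorrection g u u' v v' w w' x * g (tgt x) = arrowCorrection g u u' v v' w w' x := by
  have hαe4 : g α * g e4 = g α := hg.mul_tgt α
  have hγe4 : g γ * g e4 = g γ := hg.mul_tgt γ
  have hξe4 : g ξ * g e4 = g ξ := hg.mul_tgt ξ
  have hεe2 : g ε * g e2 = g ε := hg.mul_tgt ε
  cases x <;>
    simp only [tgt, arrowCorrection, add_mul, smul_mul_assoc, mul_assoc, hαe4, hγe4, hξe4, hεe2,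
      zero_mul]

lemma pathRelations_add_arrowCorrection (S : IsSquareZeroExtension π ι) (hG : PathRelations G)
    (hg : PathRelations g) (hπ : ∀ x, π (G x) = g x) (u u' v v' w w' : K) :
    PathRelations fun x => G x + ι (arrowCorrection g u u' v v' w w' x) :=
  S.pathRelations_add_ι hG hπ (fun x hx => by cases x <;> first | rfl | simp [IsVertex] at hx)
    (src_mul_arrowCorrection hg u u' v v' w w') (arrowCorrection_mul_tgt hg u u' v v' w w')

lemma Relations.α_mul_β_arrowCorrection [CharP A 2] (hg : Relations true g) {c : QGen → A}
    {u u' v v' w w' : K} (hc : c = arrowCorrection g u u' v v' w w') :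
    g α * c β + c α * g β + (g α * g δ * g γ * c β +
        (g α * g δ * c γ + (g α * c δ + c α * g δ) * g γ) * g β) =
      (u' + v) • (g α * (g ε * (g ξ * g β))) := by
  have hαβ : g α * g β = g α * (g ε * (g ξ * g β)) := by simpa using hg.α_mul_β_mul 1
  simp only [hc, arrowCorrection, mul_add, add_mul, mul_smul_comm, smul_mul_assoc, mul_assoc, hαβ,
    hg.α_mul_δ_mul_γ_mul, hg.α_mul_ε_mul_ξ_mul_δ_mul, hg.ξ_mul_ε_mul, mul_zero, smul_zero,
    add_zero, zero_add, add_smul]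
  linear_combination (norm := module) u • CharTwo.add_self_eq_zero (g α * (g ε * (g ξ * g β)))

lemma Relations.mesh_arrowCorrection [CharP A 2] (hg : Relations true g) {c : QGen → A}
    {u u' v v' w w' : K} (hc : c = arrowCorrection g u u' v v' w w') :
    g β * c α + c β * g α + (g δ * c γ + c δ * g γ) + (g ε * c ξ + c ε * g ξ) =
      loopCombination g 0 (u + v) (u + w) (u' + v' + w') := by
  have hδγεξ : g δ * (g γ * (g ε * g ξ)) = g ε * (g ξ * (g δ * g γ)) := by
    simpa using hg.δ_mul_γ_mul_ε_mul_ξ_mul 1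
  have hβα : g β * g α = g δ * g γ + g ε * g ξ := by simpa using hg.β_mul_α_mul 1
  simp only [hc, arrowCorrection, loopCombination, mul_add, add_mul, mul_smul_comm, smul_mul_assoc,
    mul_assoc, hβα, hδγεξ, hg.β_mul_α_mul, hg.ξ_mul_ε_mul, mul_zero, zero_mul, smul_add, zero_smul,
    add_zero, zero_add, add_smul]
  abel

namespace IsPresentation

lemma exists_α_mul_β_defect [CharP K 2] (h : IsPresentation K true g)
    (S : IsSquareZeroExtension π ι) (hG : PathRelations G) (hπ : ∀ x, π (G x) = g x) :
    ∃ x z : K, G α * G β + G α * G δ * G γ * G β =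
      ι (x • g e1 + z • (g α * (g ε * (g ξ * g β)))) := by
  have := h.charP
  have he1α (y : E) : G e1 * (G α * y) = G α * y := hG.src_mul_mul α y
  have hβe1 : G β * G e1 = G β := hG.mul_tgt β
  obtain ⟨m, hm⟩ := S.exists_eq_ι_vertex_mul hπ (v := e1)
    (x := G α * G β + G α * G δ * G γ * G β)
    (by simp only [map_add, map_mul, hπ, h.α_mul_β, if_true, mul_assoc, CharTwo.add_self_eq_zero])
    (by simp only [mul_add, add_mul, mul_assoc, he1α, hβe1])
  obtain ⟨x, z, hxz⟩ := h.exists_e1_mul_mul_e1_eq m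
  exact ⟨x, z, hm.trans (congrArg ι hxz)⟩

lemma exists_ξ_mul_ε_defect [CharP K 2] (h : IsPresentation K κ g)
    (S : IsSquareZeroExtension π ι) (hG : PathRelations G) (hπ : ∀ x, π (G x) = g x) :
    ∃ x z : K, G ξ * G ε = ι (x • g e2 + z • (g ξ * (g δ * (g γ * g ε)))) := by
  have he2ξ (y : E) : G e2 * (G ξ * y) = G ξ * y := hG.src_mul_mul ξ y
  have hεe2 : G ε * G e2 = G ε := hG.mul_tgt ε
  obtain ⟨m, hm⟩ := S.exists_eq_ι_vertex_mul hπ (v := e2) (x := G ξ * G ε)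
    (by rw [map_mul, hπ, hπ, h.ξ_mul_ε]) (by simp only [mul_assoc, he2ξ, hεe2])
  obtain ⟨x, z, hxz⟩ := h.exists_e2_mul_mul_e2_eq m
  exact ⟨x, z, hm.trans (congrArg ι hxz)⟩

lemma exists_γ_mul_δ_defect [CharP K 2] (h : IsPresentation K κ g)
    (S : IsSquareZeroExtension π ι) (hG : PathRelations G) (hπ : ∀ x, π (G x) = g x) :
    ∃ x z : K, G γ * G δ = ι (x • g e3 + z • (g γ * (g ε * (g ξ * g δ)))) := by
  have he3γ (y : E) : G e3 * (G γ * y) = G γ * y := hG.src_mul_mul γ y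
  have hδe3 : G δ * G e3 = G δ := hG.mul_tgt δ
  obtain ⟨m, hm⟩ := S.exists_eq_ι_vertex_mul hπ (v := e3) (x := G γ * G δ)
    (by rw [map_mul, hπ, hπ, h.γ_mul_δ]) (by simp only [mul_assoc, he3γ, hδe3])
  obtain ⟨x, z, hxz⟩ := h.exists_e3_mul_mul_e3_eq m
  exact ⟨x, z, hm.trans (congrArg ι hxz)⟩

lemma exists_mesh_defect [CharP K 2] (h : IsPresentation K κ g)
    (S : IsSquareZeroExtension π ι) (hG : PathRelations G) (hπ : ∀ x, π (G x) = g x) :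
    ∃ x p q z : K, G β * G α + G δ * G γ + G ε * G ξ = ι (loopCombination g x p q z) := by
  have he4β (y : E) : G e4 * (G β * y) = G β * y := hG.src_mul_mul β y
  have he4δ (y : E) : G e4 * (G δ * y) = G δ * y := hG.src_mul_mul δ y
  have he4ε (y : E) : G e4 * (G ε * y) = G ε * y := hG.src_mul_mul ε y
  have hαe4 : G α * G e4 = G α := hG.mul_tgt α
  have hγe4 : G γ * G e4 = G γ := hG.mul_tgt γ
  have hξe4 : G ξ * G e4 = G ξ := hG.mul_tgt ξ
  obtain ⟨m, hm⟩ := S.exists_eq_ι_vertex_mul hπ (v := e4)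
    (x := G β * G α + G δ * G γ + G ε * G ξ) (by simp only [map_add, map_mul, hπ, h.mesh])
    (by simp only [mul_add, add_mul, mul_assoc, he4β, he4δ, he4ε, hαe4, hγe4, hξe4])
  obtain ⟨x, p, q, z, hxz⟩ := h.exists_e4_mul_mul_e4_eq m
  exact ⟨x, p, q, z, hm.trans (congrArg ι hxz)⟩

lemma nonempty_liftDefects [CharP K 2] (h : IsPresentation K true g)
    (S : IsSquareZeroExtension π ι) (hG : PathRelations G) (hπ : ∀ x, π (G x) = g x)
    {χ₃ χ₄ : A →ₐ[K] K} (hχ₃ : ∀ x, χ₃ (g x) = if x = e3 then 1 else 0)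
    (hχ₄ : ∀ x, χ₄ (g x) = if x = e4 then 1 else 0) (hγδ : ∀ m, G γ * G δ = ι m → χ₃ m = 0)
    (hmesh : ∀ m, G β * G α + G δ * G γ + G ε * G ξ = ι m → χ₄ m = 0) :
    Nonempty (LiftDefects ι g G) := by
  obtain ⟨x₁, z₁, h₁⟩ := h.exists_α_mul_β_defect S hG hπ
  obtain ⟨x₂, z₂, h₂⟩ := h.exists_ξ_mul_ε_defect S hG hπ
  obtain ⟨x₃, z₃, h₃⟩ := h.exists_γ_mul_δ_defect S hG hπ
  obtain ⟨x₄, p, q, z₄, h₄⟩ := h.exists_mesh_defect S hG hπ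
  have hx₃ : x₃ = 0 := by simpa [hχ₃] using hγδ _ h₃
  have hx₄ : x₄ = 0 := by simpa [loopCombination, hχ₄] using hmesh _ h₄
  rw [hx₃, zero_smul, zero_add] at h₃
  rw [hx₄] at h₄
  exact ⟨⟨x₁, z₁, x₂, z₂, z₃, p, q, z₄, h₁, h₂, h₃, h₄⟩⟩

end IsPresentation

lemma LiftDefects.exists_section [CharP K 2] [CharP E 2] (D : LiftDefects ι g G)
    (hx₁ : D.x₁ = 0) (hx₂ : D.x₂ = 0) (h : IsPresentation K true g) (S : IsSquareZeroExtension π ι)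
    (hG : PathRelations G) (hπ : ∀ x, π (G x) = g x) : ∃ σ : A →ₐ[K] E, ∀ a, π (σ a) = a := by
  have := h.charP
  obtain ⟨u', hu'⟩ : ∃ u', u' + D.z₃ + D.z₂ = D.z₄ := ⟨D.z₄ - D.z₂ - D.z₃, by ring⟩
  obtain ⟨v, hv⟩ : ∃ v, u' + v = D.z₁ := ⟨D.z₁ - u', by ring⟩
  obtain ⟨u, hu⟩ : ∃ u, u + v = D.p := ⟨D.p - v, by ring⟩
  obtain ⟨w, hw⟩ : ∃ w, u + w = D.q := ⟨D.q - u, by ring⟩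
  set c := arrowCorrection g u u' v D.z₃ w D.z₂ with hc
  refine h.exists_section S (G := fun x => G x + ι (c x))
    (fun x => by rw [map_add, S.π_ι, hπ, add_zero])
    (pathRelations_add_arrowCorrection S hG h.toPathRelations hπ ..) ?_ ?_ ?_ ?_
  · rw [← CharTwo.add_eq_zero, S.α_mul_β_add_ι hπ c, D.α_mul_β,
      h.toRelations.α_mul_β_arrowCorrection hc, hv, hx₁, zero_smul, zero_add,
      CharTwo.add_self_eq_zero]
  · have hcξ : g ξ * c ε + c ξ * g ε = D.z₂ • (g ξ * (g δ * (g γ * g ε))) := by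
      simp only [hc, arrowCorrection, mul_add, mul_smul_comm, h.ξ_mul_ε, smul_zero, zero_add,
        zero_mul, add_zero]
    simp only [S.add_ι_mul_add_ι, D.ξ_mul_ε, hπ]
    rw [hcξ, hx₂, zero_smul, zero_add, CharTwo.add_self_eq_zero]
  · have hcγ : g γ * c δ + c γ * g δ = D.z₃ • (g γ * (g ε * (g ξ * g δ))) := by
      simp only [hc, arrowCorrection, add_mul, smul_mul_assoc, mul_assoc, h.γ_mul_δ, smul_zero,
        zero_add, mul_zero]
    simp only [S.add_ι_mul_add_ι, D.γ_mul_δ, hπ]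
    rw [hcγ, CharTwo.add_self_eq_zero]
  · rw [S.mesh_add_ι hπ c, D.mesh, h.toRelations.mesh_arrowCorrection hc, hu, hw, hu',
      CharTwo.add_self_eq_zero]

end Correction

section UpperBound

variable {K} {A : Type} [Ring A] [Algebra K A] {g : QGen → A}

lemma TwistedExtension.map_snd_mul {f : hochschildCocycles K A} (χ : A →ₐ[K] K)
    {x y : TwistedExtension f} (hx : χ x.fst = 0) (hy : χ y.fst = 0) :
    χ (x * y).snd = χ (f.1 x.fst y.fst) := by
  rw [snd_mul, map_add, map_add, map_mul, map_mul, hx, hy, zero_mul, mul_zero, zero_add, zero_add]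

namespace IsPresentation

variable [CharP K 2]

lemma mem_range_hochschildCoboundary (h : IsPresentation K true g) (f : hochschildCocycles K A)
    {χ₃ χ₄ : A →ₐ[K] K} (hχ₃ : ∀ x, χ₃ (g x) = if x = e3 then 1 else 0)
    (hχ₄ : ∀ x, χ₄ (g x) = if x = e4 then 1 else 0) (hγδ : χ₃ (f.1 (g γ) (g δ)) = 0)
    (hmesh : χ₄ (f.1 (g β) (g α)) + χ₄ (f.1 (g δ) (g γ)) + χ₄ (f.1 (g ε) (g ξ)) = 0) :
    (f : A →ₗ[K] A →ₗ[K] A) ∈ LinearMap.range (hochschildCoboundary K A) := by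
  have := h.nontrivial
  have S := TwistedExtension.isSquareZeroExtension (f := f)
  have := S.surjective.nontrivial
  have : CharP (TwistedExtension f) 2 :=
    charP_of_injective_algebraMap (algebraMap K (TwistedExtension f)).injective 2
  obtain ⟨G, hG, hπ⟩ := S.exists_pathRelations h.toPathRelations
  have hfst (x : QGen) : (G x).fst = g x := hπ x
  have hsnd₃ : χ₃ (G γ * G δ).snd = 0 := by
    rw [TwistedExtension.map_snd_mul] <;> simp [hfst, hχ₃, hγδ]
  have hsnd₄ : χ₄ (G β * G α + G δ * G γ + G ε * G ξ).snd = 0 := by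
    rw [TwistedExtension.snd_add, TwistedExtension.snd_add, map_add, map_add,
      TwistedExtension.map_snd_mul, TwistedExtension.map_snd_mul,
      TwistedExtension.map_snd_mul] <;> simp [hfst, hχ₄, hmesh]
  obtain ⟨D⟩ := h.nonempty_liftDefects S hG hπ hχ₃ hχ₄
    (fun m hm => (congrArg (fun x => χ₃ x.snd) hm).symm.trans hsnd₃)
    (fun m hm => (congrArg (fun x => χ₄ x.snd) hm).symm.trans hsnd₄)
  obtain ⟨hx₁, hx₂⟩ := D.x₁_eq_zero_and_x₂_eq_zero h S hG hπ
  obtain ⟨σ, hσ⟩ := D.exists_section hx₁ hx₂ h S hG hπ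
  exact TwistedExtension.mem_range_hochschildCoboundary_of_section hσ

theorem finrank_HH2_le_two (h : IsPresentation K true g) : Module.finrank K (HH2 K A) ≤ 2 := by
  obtain ⟨χ₃, hχ₃⟩ := h.exists_character (v := e3) (by decide)
  obtain ⟨χ₄, hχ₄⟩ := h.exists_character (v := e4) (by decide)
  let Λ : (A →ₗ[K] A →ₗ[K] A) →ₗ[K] (Fin 2 → K) := LinearMap.pi
    ![χ₃.toLinearMap ∘ₗ pairSum K g [(γ, δ)],
      χ₄.toLinearMap ∘ₗ pairSum K g [(β, α), (δ, γ), (ε, ξ)]]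
  have hle := finrank_HH2_le (Λ ∘ₗ (hochschildCocycles K A).subtype) fun f hf =>
    h.mem_range_hochschildCoboundary f hχ₃ hχ₄
      (by simpa [Λ, pairSum] using congrFun hf 0)
      (by simpa [Λ, pairSum, add_assoc] using congrFun hf 1)
  simpa using hle

end IsPresentation

end UpperBound

theorem finrank_HH2_A1_ne_finrank_HH2_A2_general (K : Type) [Field K] [CharP K 2] :
    Module.finrank K (HH2 K (AlgA1 K)) ≠ Module.finrank K (HH2 K (AlgA2 K)) := by
  obtain ⟨g₁, h₁⟩ := exists_isPresentation_A1 K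
  obtain ⟨g₂, h₂⟩ := exists_isPresentation_A2 K
  exact (h₂.finrank_HH2_le_two.trans_lt h₁.three_le_finrank_HH2).ne'

/-- Over an algebraically closed field `K` of characteristic `2`, the
`K`-vector space dimensions of the second Hochschild cohomology groups of `A₁ = KQ/I′`
and `A₂ = KQ/I` differ: `dim_K HH²(A₁) ≠ dim_K HH²(A₂)`. -/
theorem finrank_HH2_A1_ne_finrank_HH2_A2 (K : Type) [Field K] [IsAlgClosed K] [CharP K 2] :
    Module.finrank K (HH2 K (AlgA1 K)) ≠ Module.finrank K (HH2 K (AlgA2 K)) :=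
  finrank_HH2_A1_ne_finrank_HH2_A2_general K

end PathAlgD4
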